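/- A BIBS system is IOS if and only if there exist a smooth function V : ℝⁿ → [0,∞), class-K∞ functions α₁, α₂ and a class-K function χ such that α₁(|h(ξ)|) ≤ V(ξ) ≤ α₂(|ξ|) for all ξ ∈ ℝⁿ, and V(ξ) > χ(|μ|) implies ∇V(ξ)·f(ξ,μ) < 0, for all ξ ∈ ℝⁿ and all μ ∈ ℝᵐ. -/

import Mathlib

open MeasureTheory Set Filter Topology
open scoped ENNReal NNReal

noncomputable section

/-- A function of class `K`: continuous, strictly increasing on `[0,∞)` and vanishing at `0`. -/
def IsClassK (α : ℝ → ℝ) : Prop :=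
  ContinuousOn α (Ici 0) ∧ StrictMonoOn α (Ici 0) ∧ α 0 = 0

/-- A function of class `K∞`: class `K` and unbounded. -/
def IsClassKInfty (α : ℝ → ℝ) : Prop :=
  IsClassK α ∧ Tendsto α atTop atTop

/-- A function of class `KL`. -/
def IsClassKL (β : ℝ → ℝ → ℝ) : Prop :=
  (∀ t ∈ Ici (0:ℝ), IsClassK fun s => β s t) ∧
  ∀ s ∈ Ici (0:ℝ), AntitoneOn (fun t => β s t) (Ici 0) ∧
    Tendsto (fun t => β s t) atTop (𝓝 0)

/-- Admissible inputs: measurable and locally essentially bounded on `[0,∞)`. -/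
def IsInput {m : ℕ} (u : ℝ → EuclideanSpace ℝ (Fin m)) : Prop :=
  Measurable u ∧ ∀ T > (0:ℝ), ∃ C : ℝ, ∀ᵐ t ∂(volume.restrict (Icc 0 T)), ‖u t‖ ≤ C

/-- The essential supremum norm of an input over `[0,∞)`, as an extended nonnegative real. -/
def uNormE {m : ℕ} (u : ℝ → EuclideanSpace ℝ (Fin m)) : ℝ≥0∞ :=
  essSup (fun t => (‖u t‖₊ : ℝ≥0∞)) (volume.restrict (Ici 0))

/-- An input which is (globally) essentially bounded on `[0,∞)`. -/
def BddInput {m : ℕ} (u : ℝ → EuclideanSpace ℝ (Fin m)) : Prop := uNormE u ≠ ⊤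

/-- The essential supremum norm `‖u‖` of an input, as a real number. -/
def uNorm {m : ℕ} (u : ℝ → EuclideanSpace ℝ (Fin m)) : ℝ := (uNormE u).toReal

/-- `x` is the solution map of the forward-complete system `ẋ = f(x,u)`:
for every initial state `ξ` and admissible input `u`, `t ↦ x t ξ u` solves the corresponding
integral equation on all of `[0,∞)`. -/
def IsSolutionMap {n m : ℕ}
    (f : EuclideanSpace ℝ (Fin n) → EuclideanSpace ℝ (Fin m) → EuclideanSpace ℝ (Fin n))
    (x : ℝ → EuclideanSpace ℝ (Fin n) → (ℝ → EuclideanSpace ℝ (Fin m)) →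
      EuclideanSpace ℝ (Fin n)) : Prop :=
  ∀ ξ u, IsInput u → ∀ t ∈ Ici (0:ℝ),
    x t ξ u = ξ + ∫ s in (0:ℝ)..t, f (x s ξ u) (u s)

/-- The system is bounded-input bounded-state (BIBS): it is forward complete (encoded by the
solution-map property) and trajectories are bounded in terms of a class-`K` function of the
initial state and of the input norm. -/
def IsBIBS {n m : ℕ}
    (f : EuclideanSpace ℝ (Fin n) → EuclideanSpace ℝ (Fin m) → EuclideanSpace ℝ (Fin n))
    (x : ℝ → EuclideanSpace ℝ (Fin n) → (ℝ → EuclideanSpace ℝ (Fin m)) →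
      EuclideanSpace ℝ (Fin n)) : Prop :=
  IsSolutionMap f x ∧ ∃ σ : ℝ → ℝ, IsClassK σ ∧ ∀ ξ u, IsInput u → BddInput u →
    ∀ t ∈ Ici (0:ℝ), ‖x t ξ u‖ ≤ max (σ ‖ξ‖) (σ (uNorm u))

/-- Input-to-output stability (IOS). -/
def IsIOS {n m p : ℕ}
    (h : EuclideanSpace ℝ (Fin n) → EuclideanSpace ℝ (Fin p))
    (x : ℝ → EuclideanSpace ℝ (Fin n) → (ℝ → EuclideanSpace ℝ (Fin m)) →
      EuclideanSpace ℝ (Fin n)) : Prop :=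
  ∃ β γ, IsClassKL β ∧ IsClassK γ ∧ ∀ ξ u, IsInput u → BddInput u →
    ∀ t ∈ Ici (0:ℝ), ‖h (x t ξ u)‖ ≤ max (β ‖ξ‖ t) (γ (uNorm u))

/-! ### Comparison functions -/

theorem IsClassK.nonneg {α : ℝ → ℝ} (hα : IsClassK α) {s : ℝ} (hs : 0 ≤ s) : 0 ≤ α s := by
  have := hα.2.1.monotoneOn self_mem_Ici hs hs
  rwa [hα.2.2] at this

theorem IsClassK.pos {α : ℝ → ℝ} (hα : IsClassK α) {s : ℝ} (hs : 0 < s) : 0 < α s := by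
  have := hα.2.1 self_mem_Ici hs.le hs
  rwa [hα.2.2] at this

theorem IsClassK.mono {α : ℝ → ℝ} (hα : IsClassK α) {s t : ℝ} (hs : 0 ≤ s) (hst : s ≤ t) :
    α s ≤ α t :=
  hα.2.1.monotoneOn hs (hs.trans hst) hst

theorem IsClassK.add {α β : ℝ → ℝ} (hα : IsClassK α) (hβ : IsClassK β) :
    IsClassK fun s => α s + β s :=
  ⟨hα.1.add hβ.1, fun _ hs _ ht hst => add_lt_add (hα.2.1 hs ht hst) (hβ.2.1 hs ht hst), by
    simp [hα.2.2, hβ.2.2]⟩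

theorem IsClassK.const_mul {α : ℝ → ℝ} (hα : IsClassK α) {c : ℝ} (hc : 0 < c) :
    IsClassK fun s => c * α s :=
  ⟨continuousOn_const.mul hα.1,
    fun _ hs _ ht hst => mul_lt_mul_of_pos_left (hα.2.1 hs ht hst) hc, by simp [hα.2.2]⟩

theorem IsClassK.comp {α β : ℝ → ℝ} (hα : IsClassK α) (hβ : IsClassK β) :
    IsClassK fun s => α (β s) :=
  ⟨hα.1.comp hβ.1 fun _ hs => hβ.nonneg hs,
    fun _ hs _ ht hst => hα.2.1 (hβ.nonneg hs) (hβ.nonneg ht) (hβ.2.1 hs ht hst), by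
    simp [hα.2.2, hβ.2.2]⟩

theorem isClassK_id : IsClassK fun s => s :=
  ⟨continuousOn_id, fun _ _ _ _ h => h, rfl⟩

/-- Adding the identity to a class `K` function makes it class `K∞`. -/
theorem IsClassK.add_id {α : ℝ → ℝ} (hα : IsClassK α) : IsClassKInfty fun s => α s + s :=
  ⟨hα.add isClassK_id, tendsto_atTop_mono' _
    ((eventually_ge_atTop 0).mono fun _ hs => le_add_of_nonneg_left (hα.nonneg hs)) tendsto_id⟩

/-- A class `K∞` function has an inverse of class `K`. -/
theorem IsClassKInfty.exists_inverse {α : ℝ → ℝ} (hα : IsClassKInfty α) :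
    ∃ κ : ℝ → ℝ, IsClassK κ ∧ ∀ y z, 0 ≤ y → α y ≤ z → y ≤ κ z := by
  set F : ℝ → ℝ := fun s => α (max s 0) + min s 0 with hF
  have Fnn : ∀ s, 0 ≤ s → F s = α s := fun s hs => by simp [hF, hs]
  have Fneg : ∀ s, s ≤ 0 → F s = s := fun s hs => by simp [hF, hs, hα.1.2.2]
  have mono : StrictMono F := by
    intro a b hab
    rcases le_total 0 a with ha | ha
    · rw [Fnn a ha, Fnn b (ha.trans hab.le)]
      exact hα.1.2.1 ha (ha.trans hab.le) hab
    · rw [Fneg a ha]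
      rcases le_total 0 b with hb | hb
      · rw [Fnn b hb]
        rcases hb.eq_or_lt with rfl | hb'
        · rwa [hα.1.2.2]
        · exact ha.trans_lt (hα.1.pos hb')
      · rwa [Fneg b hb]
  have cont : Continuous F := by
    refine Continuous.add ?_ (by fun_prop)
    exact hα.1.1.comp_continuous (by fun_prop) fun s => mem_Ici.2 (le_max_right _ _)
  have surj : Function.Surjective F := by
    refine cont.surjective ?_ ?_
    · exact hα.2.congr' ((eventually_ge_atTop 0).mono fun s hs => (Fnn s hs).symm)
    · exact tendsto_id.congr' ((eventually_le_atBot 0).mono fun s hs => (Fneg s hs).symm)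
  set e := StrictMono.orderIsoOfSurjective F mono surj with he
  have e_apply : ∀ s, e s = F s := fun s => rfl
  refine ⟨e.symm, ⟨e.symm.continuous.continuousOn, fun _ _ _ _ h => e.symm.strictMono h, ?_⟩, ?_⟩
  · rw [OrderIso.symm_apply_eq, e_apply, Fneg 0 le_rfl]
  · intro y z hy hyz
    rw [OrderIso.le_symm_apply, e_apply, Fnn y hy]
    exact hyz

/-- A bound that is monotone in the first and decays in the second argument is dominated by a
class `KL` function. -/
theorem exists_isClassKL_ge {ψ : ℝ → ℝ → ℝ} {α : ℝ → ℝ} (hα : IsClassK α)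
    (hnn : ∀ s t, 0 ≤ ψ s t) (hle : ∀ s t, 0 ≤ s → 0 ≤ t → ψ s t ≤ α s)
    (hmono : ∀ t, Monotone fun s => ψ s t) (hanti : ∀ s, Antitone fun t => ψ s t)
    (hlim : ∀ s, 0 ≤ s → Tendsto (fun t => ψ s t) atTop (𝓝 0)) :
    ∃ β, IsClassKL β ∧ ∀ s t, 0 ≤ s → 0 ≤ t → ψ s t ≤ β s t := by
  have hintv : ∀ t s a b, IntervalIntegrable (fun r => ψ (s * r) t) volume a b := by
    intro t s a b
    rcases le_total 0 s with hs | hs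
    · exact Monotone.intervalIntegrable fun r r' h => hmono t (mul_le_mul_of_nonneg_left h hs)
    · exact Antitone.intervalIntegrable fun r r' h => hmono t (mul_le_mul_of_nonpos_left h hs)
  set A : ℝ → ℝ → ℝ := fun s t => ∫ r in (1:ℝ)..2, ψ (s * r) t with hA
  have A_mono : ∀ t, MonotoneOn (fun s => A s t) (Ici 0) := by
    intro t a ha b hb hab
    refine intervalIntegral.integral_mono_on one_le_two (hintv _ _ _ _) (hintv _ _ _ _) ?_
    intro r hr
    exact hmono t (mul_le_mul_of_nonneg_right hab (zero_le_one.trans hr.1))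
  have A_anti : ∀ s, Antitone fun t => A s t := by
    intro s a b hab
    refine intervalIntegral.integral_mono_on one_le_two (hintv _ _ _ _) (hintv _ _ _ _) ?_
    intro r _
    exact hanti _ hab
  have A_ge : ∀ s t, 0 ≤ s → ψ s t ≤ A s t := by
    intro s t hs
    have : ∫ r in (1:ℝ)..2, ψ s t ≤ A s t := by
      refine intervalIntegral.integral_mono_on one_le_two (by simp) (hintv _ _ _ _) ?_
      intro r hr
      exact hmono t (le_mul_of_one_le_right hs hr.1)
    simpa [show (2:ℝ) - 1 = 1 by norm_num] using this
  have A_le : ∀ s t, 0 ≤ s → A s t ≤ ψ (s * 2) t := by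
    intro s t hs
    have : A s t ≤ ∫ r in (1:ℝ)..2, ψ (s * 2) t := by
      refine intervalIntegral.integral_mono_on one_le_two (hintv _ _ _ _) (by simp) ?_
      intro r hr
      exact hmono t (mul_le_mul_of_nonneg_left hr.2 hs)
    simpa [show (2:ℝ) - 1 = 1 by norm_num] using this
  have A_zero : ∀ t, 0 ≤ t → A 0 t = 0 := by
    intro t ht
    refine le_antisymm ?_ ((hnn 0 t).trans (A_ge 0 t le_rfl))
    have h1 := A_le 0 t le_rfl
    have h2 := hle (0 * 2) t (by simp) ht
    rw [zero_mul, hα.2.2] at h2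
    rw [zero_mul] at h1
    exact h1.trans h2
  have A_cont : ∀ t, 0 ≤ t → ContinuousOn (fun s => A s t) (Ici 0) := by
    intro t ht s hs
    rcases (mem_Ici.1 hs).eq_or_lt with rfl | hs'
    · have hα2 : ContinuousWithinAt (fun s => α (s * 2)) (Ici 0) 0 := by
        have : ContinuousOn (fun s : ℝ => α (s * 2)) (Ici 0) :=
          hα.1.comp (by fun_prop) fun s hs => mul_nonneg (mem_Ici.1 hs) zero_le_two
        exact this 0 self_mem_Ici
      unfold ContinuousWithinAt at hα2 ⊢
      simp only [zero_mul, hα.2.2] at hα2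
      simp only [A_zero t ht]
      refine tendsto_of_tendsto_of_tendsto_of_le_of_le' tendsto_const_nhds hα2 ?_ ?_
      · filter_upwards [self_mem_nhdsWithin] with s hs
        exact (hnn s t).trans (A_ge s t hs)
      · filter_upwards [self_mem_nhdsWithin] with s hs
        have hs : (0:ℝ) ≤ s := hs
        exact (A_le s t hs).trans (hle _ t (by positivity) ht)
    · refine ContinuousAt.continuousWithinAt ?_
      have hP : Continuous fun b => ∫ r in (0:ℝ)..b, ψ r t :=
        intervalIntegral.continuous_primitive (fun a b => (hmono t).intervalIntegrable) 0
      have hEq : ∀ᶠ s in 𝓝 s,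
          A s t = s⁻¹ * ((∫ r in (0:ℝ)..(s * 2), ψ r t) - ∫ r in (0:ℝ)..s, ψ r t) := by
        filter_upwards [eventually_gt_nhds hs'] with s hs
        rw [intervalIntegral.integral_interval_sub_left ((hmono t).intervalIntegrable)
          ((hmono t).intervalIntegrable), hA]
        simp only
        rw [intervalIntegral.integral_comp_mul_left (fun r => ψ r t) hs.ne']
        simp
      refine ContinuousAt.congr ?_ (hEq.mono fun _ h => h.symm)
      refine (continuousAt_inv₀ hs'.ne').mul ?_
      exact ((hP.comp (continuous_mul_const 2)).sub hP).continuousAt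
  refine ⟨fun s t => A s t + s * Real.exp (-t), ⟨?_, ?_⟩, ?_⟩
  · intro t ht
    refine ⟨(A_cont t ht).add (by fun_prop), ?_, ?_⟩
    · intro a ha b hb hab
      exact add_lt_add_of_le_of_lt (A_mono t ha hb hab.le)
        (mul_lt_mul_of_pos_right hab (Real.exp_pos _))
    · simp [A_zero t ht]
  · intro s hs
    have hs : (0:ℝ) ≤ s := hs
    refine ⟨?_, ?_⟩
    · intro a _ b _ hab
      refine add_le_add (A_anti s hab) (mul_le_mul_of_nonneg_left ?_ hs)
      exact Real.exp_le_exp.2 (neg_le_neg hab)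
    · have h1 : Tendsto (fun t => A s t) atTop (𝓝 0) :=
        tendsto_of_tendsto_of_tendsto_of_le_of_le tendsto_const_nhds
          (hlim (s * 2) (by positivity))
          (fun t => (hnn s t).trans (A_ge s t hs)) (fun t => A_le s t hs)
      have h2 : Tendsto (fun t => s * Real.exp (-t)) atTop (𝓝 (s * 0)) :=
        (Real.tendsto_exp_neg_atTop_nhds_zero).const_mul s
      simpa using h1.add h2
  · intro s t hs _
    exact (A_ge s t hs).trans (le_add_of_nonneg_right (mul_nonneg hs (Real.exp_pos _).le))

/-! ### Integral Grönwall inequality and a Dini-type comparison principle -/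

/-- Grönwall's inequality in integral form. -/
theorem le_mul_exp_of_le_add_mul_integral {φ : ℝ → ℝ} {A L T : ℝ} (hL : 0 ≤ L)
    (hφ : ContinuousOn φ (Icc 0 T))
    (h : ∀ t ∈ Icc 0 T, φ t ≤ A + L * ∫ s in (0:ℝ)..t, φ s) {t : ℝ} (ht : t ∈ Icc 0 T) :
    φ t ≤ A * Real.exp (L * t) := by
  have hT : 0 ≤ T := ht.1.trans ht.2
  set ψ : ℝ → ℝ := IccExtend hT ((Icc 0 T).domRestrict φ) with hψ
  have hψc : Continuous ψ := (continuousOn_iff_continuous_domRestrict.1 hφ).Icc_extend'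
  have hψeq : ∀ s ∈ Icc 0 T, ψ s = φ s := fun s hs => by
    rw [hψ, IccExtend_of_mem hT _ hs, domRestrict_apply]
  have hI : ∀ s ∈ Icc 0 T, ∫ r in (0:ℝ)..s, φ r = ∫ r in (0:ℝ)..s, ψ r := by
    intro s hs
    refine intervalIntegral.integral_congr fun r hr => (hψeq r ?_).symm
    rw [uIcc_of_le hs.1] at hr
    exact ⟨hr.1, hr.2.trans hs.2⟩
  set Φ : ℝ → ℝ := fun s => (A + L * ∫ r in (0:ℝ)..s, ψ r) * Real.exp (-(L * s)) with hΦ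
  have hder : ∀ s, HasDerivAt Φ ((L * ψ s) * Real.exp (-(L * s)) +
      (A + L * ∫ r in (0:ℝ)..s, ψ r) * (Real.exp (-(L * s)) * (-(L * 1)))) s := by
    intro s
    have h1 : HasDerivAt (fun s => A + L * ∫ r in (0:ℝ)..s, ψ r) (L * ψ s) s :=
      ((hψc.integral_hasStrictDerivAt 0 s).hasDerivAt.const_mul L).const_add A
    have h2 : HasDerivAt (fun s => Real.exp (-(L * s))) (Real.exp (-(L * s)) * (-(L * 1))) s :=
      (((hasDerivAt_id s).const_mul L).neg).exp
    exact h1.mul h2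
  have anti : AntitoneOn Φ (Icc 0 T) := by
    refine antitoneOn_of_deriv_nonpos (convex_Icc 0 T)
      (fun s _ => (hder s).continuousAt.continuousWithinAt)
      (fun s _ => (hder s).differentiableAt.differentiableWithinAt) ?_
    intro s hs
    rw [interior_Icc] at hs
    have hs' : s ∈ Icc 0 T := Ioo_subset_Icc_self hs
    rw [(hder s).deriv]
    have := h s hs'
    rw [hI s hs', ← hψeq s hs'] at this
    have he := Real.exp_pos (-(L * s))
    nlinarith [mul_le_mul_of_nonneg_left this (mul_nonneg hL he.le)]
  have h0 : Φ t ≤ A := by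
    have := anti (left_mem_Icc.2 hT) ht ht.1
    simpa [hΦ] using this
  have h1 := h t ht
  rw [hI t ht] at h1
  have h2 : A + L * ∫ r in (0:ℝ)..t, ψ r = Φ t * Real.exp (L * t) := by
    rw [hΦ]
    simp only
    rw [mul_assoc, ← Real.exp_add]
    simp
  rw [h2] at h1
  exact h1.trans (mul_le_mul_of_nonneg_right h0 (Real.exp_pos _).le)

/-- A continuous function which, at every time where it is at least `c`, decreases to the right at
rate `a`, lies below `max c (φ 0 - a t)`. -/
theorem le_max_sub_of_frequently_decreasing {φ : ℝ → ℝ} {a c : ℝ} (ha : 0 ≤ a)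
    (hφ : ContinuousOn φ (Ici 0))
    (h : ∀ t, 0 ≤ t → c ≤ φ t → ∃ᶠ z in 𝓝[>] t, φ z ≤ φ t - a * (z - t)) {t : ℝ} (ht : 0 ≤ t) :
    φ t ≤ max c (φ 0 - a * t) := by
  have hB : Continuous fun t : ℝ => max c (φ 0 - a * t) := by fun_prop
  have hφt : ContinuousOn φ (Icc 0 t) := hφ.mono Icc_subset_Ici_self
  have hcl : IsClosed ({s | φ s ≤ max c (φ 0 - a * s)} ∩ Icc 0 t) := by
    rw [inter_comm]
    exact isClosed_Icc.isClosed_le hφt hB.continuousOn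
  refine hcl.mem_of_ge_of_forall_exists_gt (a := 0) (by simp) ht ?_
  rintro s ⟨hs, hs0, hst⟩
  rw [mem_ofPred_eq] at hs
  have hIoc : Ioc s t ∈ 𝓝[>] s := Ioc_mem_nhdsGT hst
  rcases hs.eq_or_lt with heq | hlt
  · have hc : c ≤ φ s := heq ▸ le_max_left _ _
    obtain ⟨z, hz, hzI⟩ := ((h s hs0 hc).and_eventually hIoc).exists
    refine ⟨z, ?_, hzI⟩
    rw [mem_ofPred_eq]
    rcases le_total c (φ 0 - a * s) with hcs | hcs
    · rw [max_eq_right hcs] at heq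
      exact le_max_of_le_right (by linarith)
    · rw [max_eq_left hcs] at heq
      exact le_max_of_le_left (by nlinarith [hzI.1])
  · have h1 : ContinuousWithinAt φ (Ioi s) s :=
      (hφ s hs0).mono fun z hz => hs0.trans (mem_Ioi.1 hz).le
    have h2 := h1.eventually_lt (hB.continuousAt.continuousWithinAt) hlt
    obtain ⟨z, hz, hzI⟩ := (h2.and hIoc).exists
    exact ⟨z, le_of_lt hz, hzI⟩

/-! ### Inputs -/

section Inputs

variable {m : ℕ} {u : ℝ → EuclideanSpace ℝ (Fin m)}

theorem uNorm_nonneg : 0 ≤ uNorm u := ENNReal.toReal_nonneg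

theorem BddInput.ae_norm_le (hu : BddInput u) :
    ∀ᵐ t ∂(volume.restrict (Ici (0:ℝ))), ‖u t‖ ≤ uNorm u := by
  filter_upwards [ENNReal.ae_le_essSup (μ := volume.restrict (Ici (0:ℝ)))
    (fun t => (‖u t‖₊ : ℝ≥0∞))] with t ht
  have := ENNReal.toReal_mono hu ht
  simpa [uNorm] using this

theorem uNormE_le_of_forall {r : ℝ} (hr : ∀ t, ‖u t‖ ≤ r) : uNormE u ≤ ENNReal.ofReal r := by
  refine essSup_le_of_ae_le _ (Eventually.of_forall fun t => ?_)
  change (‖u t‖₊ : ℝ≥0∞) ≤ ENNReal.ofReal r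
  rw [← ENNReal.ofReal_coe_nnreal]
  exact ENNReal.ofReal_le_ofReal (hr t)

theorem bddInput_of_forall {r : ℝ} (hr : ∀ t, ‖u t‖ ≤ r) : BddInput u :=
  ne_top_of_le_ne_top ENNReal.ofReal_ne_top (uNormE_le_of_forall hr)

theorem uNorm_le_of_forall {r : ℝ} (hr : ∀ t, ‖u t‖ ≤ r) : uNorm u ≤ r := by
  have h0 : 0 ≤ r := (norm_nonneg _).trans (hr 0)
  have := ENNReal.toReal_mono ENNReal.ofReal_ne_top (uNormE_le_of_forall hr)
  rwa [ENNReal.toReal_ofReal h0] at this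

theorem isInput_of_forall {r : ℝ} (hm : Measurable u) (hr : ∀ t, ‖u t‖ ≤ r) : IsInput u :=
  ⟨hm, fun _ _ => ⟨r, Eventually.of_forall hr⟩⟩

end Inputs

/-! ### Locally Lipschitz vector fields -/

section VectorField

variable {E F : Type*} [NormedAddCommGroup E] [NormedAddCommGroup F] [ProperSpace E]
  [ProperSpace F] {f : E → F → E}

theorem exists_lipschitz_const {G : Type*} [NormedAddCommGroup G] {f : E → F → G}
    (hf : LocallyLipschitz fun q : E × F => f q.1 q.2) (R r : ℝ) :
    ∃ K : ℝ, 0 ≤ K ∧ ∀ a b μ, ‖a‖ ≤ R → ‖b‖ ≤ R → ‖μ‖ ≤ r → ‖f a μ - f b μ‖ ≤ K * ‖a - b‖ := by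
  obtain ⟨K, hK⟩ := (hf.locallyLipschitzOn (s := Metric.closedBall (0:E) R ×ˢ
    Metric.closedBall (0:F) r)).exists_lipschitzOnWith_of_compact
    ((isCompact_closedBall _ _).prod (isCompact_closedBall _ _))
  refine ⟨K, K.2, fun a b μ ha hb hμ => ?_⟩
  have := hK.dist_le_mul (a, μ) ⟨by simpa using ha, by simpa using hμ⟩ (b, μ)
    ⟨by simpa using hb, by simpa using hμ⟩
  simpa [dist_eq_norm] using this

theorem exists_norm_le_const
    (hf : Continuous fun q : E × F => f q.1 q.2) (R r : ℝ) :
    ∃ M : ℝ, 0 ≤ M ∧ ∀ a μ, ‖a‖ ≤ R → ‖μ‖ ≤ r → ‖f a μ‖ ≤ M := by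
  obtain ⟨M, hM⟩ := ((isCompact_closedBall (0:E) R).prod
    (isCompact_closedBall (0:F) r)).exists_bound_of_continuousOn hf.continuousOn
  refine ⟨max M 0, le_max_right _ _, fun a μ ha hμ => le_max_of_le_left ?_⟩
  exact hM (a, μ) ⟨by simpa using ha, by simpa using hμ⟩

end VectorField

/-! ### Solutions of the integral equation -/

section Solutions

variable {E F : Type*} [NormedAddCommGroup E] [NormedSpace ℝ E] [NormedAddCommGroup F]

/-- `X` is a continuous solution of `ẋ = f(x,u)`, `x(0) = ξ`, on `[0,T]`. -/
structure IsSolutionOn (f : E → F → E) (X : ℝ → E) (ξ : E) (u : ℝ → F) (T : ℝ) : Prop where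
  cont : ContinuousOn X (Icc 0 T)
  integrable : IntervalIntegrable (fun s => f (X s) (u s)) volume 0 T
  eq : ∀ t ∈ Icc 0 T, X t = ξ + ∫ s in (0:ℝ)..t, f (X s) (u s)

/-- Lipschitz dependence on the initial state. -/
theorem IsSolutionOn.norm_sub_le {f : E → F → E} {X Y : ℝ → E} {ξ η : E} {u v : ℝ → F}
    {T R r K : ℝ} (hX : IsSolutionOn f X ξ u T) (hY : IsSolutionOn f Y η v T)
    (huv : ∀ᵐ t ∂(volume.restrict (Ioc 0 T)), u t = v t)
    (hu : ∀ᵐ t ∂(volume.restrict (Ioc 0 T)), ‖u t‖ ≤ r) (hK : 0 ≤ K)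
    (hf : ∀ a b μ, ‖a‖ ≤ R → ‖b‖ ≤ R → ‖μ‖ ≤ r → ‖f a μ - f b μ‖ ≤ K * ‖a - b‖)
    (hXR : ∀ t ∈ Icc 0 T, ‖X t‖ ≤ R) (hYR : ∀ t ∈ Icc 0 T, ‖Y t‖ ≤ R) {t : ℝ}
    (ht : t ∈ Icc 0 T) : ‖X t - Y t‖ ≤ ‖ξ - η‖ * Real.exp (K * t) := by
  have hc : ContinuousOn (fun t => ‖X t - Y t‖) (Icc 0 T) := (hX.cont.sub hY.cont).norm
  refine le_mul_exp_of_le_add_mul_integral hK hc (fun t ht => ?_) ht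
  have hsub : uIcc 0 t ⊆ uIcc 0 T := by
    rw [uIcc_of_le ht.1, uIcc_of_le (ht.1.trans ht.2)]
    exact Icc_subset_Icc_right ht.2
  have hXi := hX.integrable.mono_set hsub
  have hYi := hY.integrable.mono_set hsub
  have hmono : Ioc 0 t ⊆ Ioc 0 T := Ioc_subset_Ioc_right ht.2
  have key : ‖∫ s in (0:ℝ)..t, (f (X s) (u s) - f (Y s) (v s))‖ ≤
      ∫ s in (0:ℝ)..t, K * ‖X s - Y s‖ := by
    refine intervalIntegral.norm_integral_le_of_norm_le ht.1 ?_ ?_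
    · have h1 := ae_restrict_of_ae_restrict_of_subset hmono huv
      have h2 := ae_restrict_of_ae_restrict_of_subset hmono hu
      rw [ae_restrict_iff' measurableSet_Ioc] at h1 h2
      filter_upwards [h1, h2] with s hs1 hs2 hs
      have hs' : s ∈ Icc 0 T := ⟨hs.1.le, hs.2.trans ht.2⟩
      rw [← hs1 hs]
      exact hf _ _ _ (hXR s hs') (hYR s hs') (hs2 hs)
    · refine ContinuousOn.intervalIntegrable ?_
      rw [uIcc_of_le ht.1]
      exact (continuousOn_const.mul hc).mono (Icc_subset_Icc_right ht.2)
  rw [intervalIntegral.integral_sub hXi hYi, intervalIntegral.integral_const_mul] at key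
  calc ‖X t - Y t‖ = ‖(ξ - η) + ((∫ s in (0:ℝ)..t, f (X s) (u s)) -
        ∫ s in (0:ℝ)..t, f (Y s) (v s))‖ := by
        rw [hX.eq t ht, hY.eq t ht]; congr 1; abel
    _ ≤ _ := (norm_add_le _ _).trans (add_le_add_right key _)

/-- Uniqueness of solutions. -/
theorem IsSolutionOn.eq_of_ae_eq [ProperSpace E] [ProperSpace F] {f : E → F → E}
    (hf : LocallyLipschitz fun q : E × F => f q.1 q.2) {X Y : ℝ → E} {ξ : E} {u v : ℝ → F}
    {T r : ℝ} (hX : IsSolutionOn f X ξ u T) (hY : IsSolutionOn f Y ξ v T)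
    (huv : ∀ᵐ t ∂(volume.restrict (Ioc 0 T)), u t = v t)
    (hu : ∀ᵐ t ∂(volume.restrict (Ioc 0 T)), ‖u t‖ ≤ r) {t : ℝ} (ht : t ∈ Icc 0 T) :
    X t = Y t := by
  obtain ⟨R₁, hR₁⟩ := isCompact_Icc.exists_bound_of_continuousOn hX.cont
  obtain ⟨R₂, hR₂⟩ := isCompact_Icc.exists_bound_of_continuousOn hY.cont
  obtain ⟨K, hK0, hK⟩ := exists_lipschitz_const hf (max R₁ R₂) r
  have := hX.norm_sub_le hY huv hu hK0 hK (fun s hs => le_max_of_le_left (hR₁ s hs))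
    (fun s hs => le_max_of_le_right (hR₂ s hs)) ht
  rw [sub_self, norm_zero, zero_mul, norm_le_zero_iff, sub_eq_zero] at this
  exact this

end Solutions

/-! ### Trajectories of BIBS systems -/

section Trajectories

variable {n m : ℕ}
  {f : EuclideanSpace ℝ (Fin n) → EuclideanSpace ℝ (Fin m) → EuclideanSpace ℝ (Fin n)}
  {x : ℝ → EuclideanSpace ℝ (Fin n) → (ℝ → EuclideanSpace ℝ (Fin m)) → EuclideanSpace ℝ (Fin n)}

theorem IsSolutionMap.apply_zero (hx : IsSolutionMap f x) {u : ℝ → EuclideanSpace ℝ (Fin m)}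
    (hu : IsInput u) (ξ : EuclideanSpace ℝ (Fin n)) : x 0 ξ u = ξ := by
  rw [hx ξ u hu 0 self_mem_Ici]; simp

/-- A primitive, with its default value where the integrand fails to be integrable, is measurable
on `[0,T]`. -/
theorem aestronglyMeasurable_primitive {E : Type*} [NormedAddCommGroup E] [NormedSpace ℝ E]
    (g : ℝ → E) (T : ℝ) :
    AEStronglyMeasurable (fun t => ∫ s in (0:ℝ)..t, g s) (volume.restrict (Ioc 0 T)) := by
  set I : Set ℝ := {t | 0 ≤ t ∧ IntervalIntegrable g volume 0 t} with hI
  have hIconn : I.OrdConnected := by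
    refine ordConnected_def.2 fun a ha b hb t ht => ⟨ha.1.trans ht.1, hb.2.mono_set ?_⟩
    rw [uIcc_of_le (ha.1.trans ht.1), uIcc_of_le hb.1]
    exact Icc_subset_Icc_right ht.2
  have hIc : ContinuousOn (fun t => ∫ s in (0:ℝ)..t, g s) I := by
    have hcont : ∀ b ∈ I, ContinuousOn (fun t => ∫ s in (0:ℝ)..t, g s) (Icc 0 b) := by
      intro b hb
      have := intervalIntegral.continuousOn_primitive_interval' hb.2 left_mem_uIcc
      rwa [uIcc_of_le hb.1] at this
    intro t ht
    by_cases h : ∃ b ∈ I, t < b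
    · obtain ⟨b, hb, htb⟩ := h
      refine (hcont b hb t ⟨ht.1, htb.le⟩).mono_of_mem_nhdsWithin ?_
      filter_upwards [self_mem_nhdsWithin, mem_nhdsWithin_of_mem_nhds (Iio_mem_nhds htb)]
        with s hs hsb
      exact ⟨hs.1, (mem_Iio.1 hsb).le⟩
    · push Not at h
      exact (hcont t ht t ⟨ht.1, le_rfl⟩).mono fun s hs => ⟨hs.1, h s hs⟩
  have hIm : MeasurableSet I := hIconn.measurableSet
  have h1 : AEStronglyMeasurable (fun t => ∫ s in (0:ℝ)..t, g s)
      (volume.restrict (I ∪ (Ioc 0 T \ I))) := by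
    refine aestronglyMeasurable_union_iff.2 ⟨hIc.aestronglyMeasurable hIm, ?_⟩
    refine (aestronglyMeasurable_const (b := (0:E))).congr ?_
    refine (ae_restrict_iff' (measurableSet_Ioc.diff hIm)).2 (Eventually.of_forall fun t ht => ?_)
    refine (intervalIntegral.integral_undef fun h => ht.2 ⟨ht.1.1.le, h⟩).symm
  refine h1.mono_measure (Measure.restrict_mono ?_ le_rfl)
  rw [union_sdiff_self]
  exact subset_union_right

theorem ae_restrict_Ioc_of_Ici {p : ℝ → Prop} (h : ∀ᵐ t ∂(volume.restrict (Ici (0:ℝ))), p t)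
    (T : ℝ) : ∀ᵐ t ∂(volume.restrict (Ioc 0 T)), p t :=
  ae_restrict_of_ae_restrict_of_subset (fun _ ht => mem_Ici.2 ht.1.le) h

theorem IsBIBS.isSolutionOn (hf : Continuous fun q : EuclideanSpace ℝ (Fin n) ×
    EuclideanSpace ℝ (Fin m) => f q.1 q.2) (hB : IsBIBS f x) {u : ℝ → EuclideanSpace ℝ (Fin m)}
    (hu : IsInput u) (hb : BddInput u) (ξ : EuclideanSpace ℝ (Fin n)) {T : ℝ} (hT : 0 ≤ T) :
    IsSolutionOn f (fun t => x t ξ u) ξ u T := by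
  obtain ⟨hx, σ, -, hσ⟩ := hB
  set R := max (σ ‖ξ‖) (σ (uNorm u))
  obtain ⟨M, -, hM⟩ := exists_norm_le_const hf R (uNorm u)
  have hmeas : AEStronglyMeasurable (fun t => x t ξ u) (volume.restrict (Ioc 0 T)) := by
    refine ((aestronglyMeasurable_primitive (fun s => f (x s ξ u) (u s)) T).const_add ξ).congr ?_
    refine (ae_restrict_iff' measurableSet_Ioc).2 (Eventually.of_forall fun t ht => ?_)
    exact (hx ξ u hu t ht.1.le).symm
  have hintv : IntervalIntegrable (fun s => f (x s ξ u) (u s)) volume 0 T := by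
    rw [intervalIntegrable_iff_integrableOn_Ioc_of_le hT]
    refine IntegrableOn.of_bound (C := M) (by simp) ?_ ?_
    · exact hf.comp_aestronglyMeasurable (hmeas.prodMk hu.1.aestronglyMeasurable)
    · have h1 := ae_restrict_Ioc_of_Ici hb.ae_norm_le T
      filter_upwards [h1, ae_restrict_mem measurableSet_Ioc] with t ht htT
      exact hM _ _ (hσ ξ u hu hb t htT.1.le) ht
  refine ⟨?_, hintv, fun t ht => hx ξ u hu t ht.1⟩
  have := intervalIntegral.continuousOn_primitive_interval' hintv left_mem_uIcc
  rw [uIcc_of_le hT] at this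
  exact (this.const_add ξ).congr fun t ht => hx ξ u hu t ht.1

theorem IsBIBS.continuousOn (hf : Continuous fun q : EuclideanSpace ℝ (Fin n) ×
    EuclideanSpace ℝ (Fin m) => f q.1 q.2) (hB : IsBIBS f x) {u : ℝ → EuclideanSpace ℝ (Fin m)}
    (hu : IsInput u) (hb : BddInput u) (ξ : EuclideanSpace ℝ (Fin n)) :
    ContinuousOn (fun t => x t ξ u) (Ici 0) := by
  intro t ht
  have ht : (0:ℝ) ≤ t := ht
  refine ((hB.isSolutionOn hf hu hb ξ (by linarith : 0 ≤ t + 1)).cont t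
    ⟨ht, by linarith⟩).mono_of_mem_nhdsWithin ?_
  filter_upwards [self_mem_nhdsWithin, mem_nhdsWithin_of_mem_nhds (Iio_mem_nhds (lt_add_one t))]
    with s hs hsb
  exact ⟨hs, (mem_Iio.1 hsb).le⟩

/-- Concatenation of the inputs `u` on `[0,τ)` and `v` from time `τ` on. -/
def concatInput (τ : ℝ) (u v : ℝ → EuclideanSpace ℝ (Fin m)) : ℝ → EuclideanSpace ℝ (Fin m) :=
  fun s => if s < τ then u s else v (s - τ)

theorem measurable_concatInput {τ : ℝ} {u v : ℝ → EuclideanSpace ℝ (Fin m)} (hu : Measurable u)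
    (hv : Measurable v) : Measurable (concatInput τ u v) :=
  Measurable.ite measurableSet_Iio hu (hv.comp (measurable_sub_const τ))

theorem norm_concatInput_le {τ r : ℝ} {u v : ℝ → EuclideanSpace ℝ (Fin m)} (hu : ∀ t, ‖u t‖ ≤ r)
    (hv : ∀ t, ‖v t‖ ≤ r) (t : ℝ) : ‖concatInput τ u v t‖ ≤ r := by
  unfold concatInput
  split_ifs
  · exact hu t
  · exact hv _

/-- The semigroup property of the solution map. -/
theorem IsBIBS.apply_concatInput (hf : LocallyLipschitz fun q : EuclideanSpace ℝ (Fin n) ×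
    EuclideanSpace ℝ (Fin m) => f q.1 q.2) (hB : IsBIBS f x) {r : ℝ}
    {u v : ℝ → EuclideanSpace ℝ (Fin m)} (hu : Measurable u) (hv : Measurable v)
    (hur : ∀ t, ‖u t‖ ≤ r) (hvr : ∀ t, ‖v t‖ ≤ r) (ξ : EuclideanSpace ℝ (Fin n)) {τ t : ℝ}
    (hτ : 0 ≤ τ) (ht : 0 ≤ t) :
    x (t + τ) ξ (concatInput τ u v) = x t (x τ ξ u) v := by
  set w := concatInput τ u v with hw
  have hwm : Measurable w := measurable_concatInput hu hv
  have hwr : ∀ t, ‖w t‖ ≤ r := norm_concatInput_le hur hvr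
  have hsol : ∀ T, 0 ≤ T → IsSolutionOn f (fun t => x t ξ w) ξ w T := fun T hT =>
    hB.isSolutionOn hf.continuous (isInput_of_forall hwm hwr) (bddInput_of_forall hwr) ξ hT
  have hτeq : x τ ξ w = x τ ξ u := by
    refine (hsol τ hτ).eq_of_ae_eq hf (hB.isSolutionOn hf.continuous (isInput_of_forall hu hur)
      (bddInput_of_forall hur) ξ hτ) (r := r) ?_ (Eventually.of_forall hwr) ⟨hτ, le_rfl⟩
    rw [← restrict_Ioo_eq_restrict_Ioc]
    refine (ae_restrict_iff' measurableSet_Ioo).2 (Eventually.of_forall fun s hs => ?_)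
    simp [hw, concatInput, hs.2]
  have htot := hsol (t + τ) (by positivity)
  have hi : ∀ s ∈ Icc 0 t,
      IntervalIntegrable (fun s => f (x s ξ w) (w s)) volume τ (s + τ) := by
    intro s hs
    refine htot.integrable.mono_set ?_
    rw [uIcc_of_le (by linarith [hs.1]), uIcc_of_le (by linarith)]
    exact Icc_subset_Icc hτ (by linarith [hs.2])
  have hshift : IsSolutionOn f (fun s => x (s + τ) ξ w) (x τ ξ u) (fun s => w (s + τ)) t := by
    refine ⟨?_, ?_, ?_⟩
    · refine htot.cont.comp (by fun_prop) fun s hs => ⟨by linarith [hs.1], by linarith [hs.2]⟩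
    · have := (hi t ⟨ht, le_rfl⟩).comp_add_right τ
      simpa using this
    · intro s hs
      have h1 := htot.eq (s + τ) ⟨by linarith [hs.1], by linarith [hs.2]⟩
      have h2 := htot.eq τ ⟨hτ, by linarith⟩
      rw [intervalIntegral.integral_comp_add_right (fun s => f (x s ξ w) (w s)), zero_add,
        ← hτeq, h1, h2, add_assoc, intervalIntegral.integral_add_adjacent_intervals _ (hi s hs)]
      exact (hsol τ hτ).integrable
  refine hshift.eq_of_ae_eq hf (hB.isSolutionOn hf.continuous (isInput_of_forall hv hvr)
      (bddInput_of_forall hvr) _ ht) (r := r) ?_ (Eventually.of_forall fun s => hwr _) ⟨ht, le_rfl⟩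
  refine (ae_restrict_iff' measurableSet_Ioc).2 (Eventually.of_forall fun s hs => ?_)
  simp [hw, concatInput, hs.1.le]

end Trajectories

/-! ### Sufficiency of the Lyapunov condition -/

section Sufficiency

variable {n m p : ℕ}
  {f : EuclideanSpace ℝ (Fin n) → EuclideanSpace ℝ (Fin m) → EuclideanSpace ℝ (Fin n)}
  {x : ℝ → EuclideanSpace ℝ (Fin n) → (ℝ → EuclideanSpace ℝ (Fin m)) → EuclideanSpace ℝ (Fin n)}

/-- If the derivative of `V` along all admissible velocities at `x(t)` is at most `-a`, then `V`
decreases along the trajectory at rate at least `a / 2` immediately after time `t`. -/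
theorem eventually_lyapunov_le
    (hf : LocallyLipschitz fun q : EuclideanSpace ℝ (Fin n) × EuclideanSpace ℝ (Fin m) =>
      f q.1 q.2) (hB : IsBIBS f x) {V : EuclideanSpace ℝ (Fin n) → ℝ}
    (hV : Differentiable ℝ V) {u : ℝ → EuclideanSpace ℝ (Fin m)} (hu : IsInput u)
    (hb : BddInput u) (ξ : EuclideanSpace ℝ (Fin n)) {t a : ℝ} (ht : 0 ≤ t) (ha : 0 < a)
    (hdec : ∀ μ, ‖μ‖ ≤ uNorm u → fderiv ℝ V (x t ξ u) (f (x t ξ u) μ) ≤ -a) :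
    ∀ᶠ z in 𝓝[>] t, V (x z ξ u) ≤ V (x t ξ u) - a / 2 * (z - t) := by
  obtain ⟨σ, hσK, hσ⟩ := hB.2
  set r := uNorm u
  set R := max (σ ‖ξ‖) (σ r)
  set q := x t ξ u with hq
  set D := fderiv ℝ V q
  have hXR : ∀ s, 0 ≤ s → ‖x s ξ u‖ ≤ R := fun s hs => hσ ξ u hu hb s hs
  obtain ⟨M, hM0, hM⟩ := exists_norm_le_const hf.continuous R r
  obtain ⟨K, hK0, hK⟩ := exists_lipschitz_const hf R r
  have hur := hb.ae_norm_le
  have hincr : ∀ z, t ≤ z → IntervalIntegrable (fun s => f (x s ξ u) (u s)) volume t z ∧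
      x z ξ u - q = ∫ s in t..z, f (x s ξ u) (u s) := by
    intro z hz
    have hsol := hB.isSolutionOn hf.continuous hu hb ξ (ht.trans hz)
    have hi : IntervalIntegrable (fun s => f (x s ξ u) (u s)) volume t z := by
      refine hsol.integrable.mono_set ?_
      rw [uIcc_of_le hz, uIcc_of_le (ht.trans hz)]
      exact Icc_subset_Icc_left ht
    have hi' := (hB.isSolutionOn hf.continuous hu hb ξ ht).integrable
    refine ⟨hi, ?_⟩
    have h1 := hsol.eq z ⟨ht.trans hz, le_rfl⟩
    have h2 := hsol.eq t ⟨ht, hz⟩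
    rw [hq, h1, h2, ← intervalIntegral.integral_add_adjacent_intervals hi' hi]
    abel
  have hae : ∀ z, ∀ᵐ s, s ∈ Ioc t z → ‖u s‖ ≤ r := by
    intro z
    refine (ae_restrict_iff' measurableSet_Ioc).1 ?_
    exact ae_restrict_of_ae_restrict_of_subset (fun s hs => mem_Ici.2 (ht.trans hs.1.le)) hur
  have hspeed : ∀ z, t ≤ z → ‖x z ξ u - q‖ ≤ M * (z - t) := by
    intro z hz
    rw [(hincr z hz).2]
    have : ‖∫ s in t..z, f (x s ξ u) (u s)‖ ≤ ∫ s in t..z, M := by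
      refine intervalIntegral.norm_integral_le_of_norm_le hz ?_ (by simp)
      filter_upwards [hae z] with s hs hsI
      exact hM _ _ (hXR s (ht.trans hsI.1.le)) (hs hsI)
    simpa [mul_comm] using this
  have hlin : ∀ z, t ≤ z → D (x z ξ u - q) ≤ (z - t) * (-a + ‖D‖ * (K * (M * (z - t)))) := by
    intro z hz
    rw [(hincr z hz).2, ← D.intervalIntegral_comp_comm (hincr z hz).1]
    have : ∫ s in t..z, D (f (x s ξ u) (u s)) ≤
        ∫ s in t..z, (-a + ‖D‖ * (K * (M * (z - t)))) := by
      refine intervalIntegral.integral_mono_ae_restrict hz ?_ (by simp) ?_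
      · exact ⟨D.integrable_comp (hincr z hz).1.1, D.integrable_comp (hincr z hz).1.2⟩
      · have hae' := (ae_restrict_iff' measurableSet_Ioc).2 (hae z)
        rw [← restrict_Ioc_eq_restrict_Icc]
        filter_upwards [hae', ae_restrict_mem measurableSet_Ioc] with s hs hsI
        have hs0 : 0 ≤ s := ht.trans hsI.1.le
        have h1 : ‖f (x s ξ u) (u s) - f q (u s)‖ ≤ K * (M * (z - t)) := by
          refine (hK _ _ _ (hXR s hs0) (hXR t ht) hs).trans (mul_le_mul_of_nonneg_left ?_ hK0)
          refine (hspeed s hsI.1.le).trans (mul_le_mul_of_nonneg_left ?_ hM0)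
          linarith [hsI.2]
        have h2 := (le_abs_self _).trans ((D.le_opNorm (f (x s ξ u) (u s) - f q (u s))).trans
          (mul_le_mul_of_nonneg_left h1 (norm_nonneg D)))
        rw [map_sub] at h2
        have h3 := hdec (u s) hs
        linarith
    rwa [intervalIntegral.integral_const, smul_eq_mul] at this
  have hXc : Tendsto (fun z => x z ξ u) (𝓝[>] t) (𝓝 q) :=
    ((hB.continuousOn hf.continuous hu hb ξ) t ht).mono_left
      (nhdsWithin_mono _ fun z hz => mem_Ici.2 (ht.trans (mem_Ioi.1 hz).le))
  set c := a / (4 * (M + 1)) with hc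
  have hc0 : 0 < c := by positivity
  have hcM : c * M ≤ a / 4 := by
    rw [hc, div_mul_eq_mul_div, div_le_div_iff₀ (by positivity) (by positivity)]
    nlinarith
  have hlo := hXc.eventually ((hV q).hasFDerivAt.isLittleO.def hc0)
  have hsmall : ∀ᶠ z in 𝓝[>] t, ‖D‖ * (K * (M * (z - t))) < a / 4 := by
    have : ContinuousAt (fun z => ‖D‖ * (K * (M * (z - t)))) t := by fun_prop
    refine (this.eventually_lt continuousAt_const ?_).filter_mono nhdsWithin_le_nhds
    simpa using by positivity
  filter_upwards [hlo, hsmall, self_mem_nhdsWithin] with z h1 h2 hz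
  have hz : t < z := hz
  have h3 := hlin z hz.le
  have h4 := hspeed z hz.le
  have h5 : V (x z ξ u) - V q - D (x z ξ u - q) ≤ c * (M * (z - t)) :=
    (le_abs_self _).trans (h1.trans (mul_le_mul_of_nonneg_left h4 hc0.le))
  nlinarith [mul_le_mul_of_nonneg_right hcM (sub_pos.2 hz).le,
    mul_le_mul_of_nonneg_left h2.le (sub_pos.2 hz).le]

/-- Uniform decay of a strict Lyapunov function along trajectories of a BIBS system. -/
theorem exists_uniform_decay
    (hf : LocallyLipschitz fun q : EuclideanSpace ℝ (Fin n) × EuclideanSpace ℝ (Fin m) =>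
      f q.1 q.2) (hB : IsBIBS f x) {V : EuclideanSpace ℝ (Fin n) → ℝ} {χ : ℝ → ℝ}
    (hV : ContDiff ℝ 1 V) (hχ : IsClassK χ)
    (hdec : ∀ ξ μ, χ ‖μ‖ < V ξ → fderiv ℝ V ξ (f ξ μ) < 0) (S : ℝ) {ε : ℝ} (hε : 0 < ε) :
    ∃ a > 0, ∀ ξ u, IsInput u → BddInput u → ‖ξ‖ ≤ S → uNorm u ≤ S → ∀ t, 0 ≤ t →
      V (x t ξ u) ≤ max (max ε (2 * χ (uNorm u))) (V ξ - a * t) := by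
  obtain ⟨hx, σ, hσK, hσ⟩ := id hB
  have hχc : Continuous fun μ : EuclideanSpace ℝ (Fin m) => χ ‖μ‖ :=
    hχ.1.comp_continuous continuous_norm fun μ => norm_nonneg μ
  set C : Set (EuclideanSpace ℝ (Fin n) × EuclideanSpace ℝ (Fin m)) :=
    (Metric.closedBall 0 (σ S) ×ˢ Metric.closedBall 0 S) ∩
      {q | ε ≤ V q.1 ∧ 2 * χ ‖q.2‖ ≤ V q.1} with hC
  have hCc : IsCompact C := by
    refine ((isCompact_closedBall _ _).prod (isCompact_closedBall _ _)).inter_right ?_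
    refine (isClosed_le continuous_const (hV.continuous.comp continuous_fst)).inter ?_
    exact isClosed_le (continuous_const.mul (hχc.comp continuous_snd))
      (hV.continuous.comp continuous_fst)
  have hcont : Continuous fun q : EuclideanSpace ℝ (Fin n) × EuclideanSpace ℝ (Fin m) =>
      fderiv ℝ V q.1 (f q.1 q.2) :=
    ((hV.continuous_fderiv one_ne_zero).comp continuous_fst).clm_apply hf.continuous
  obtain ⟨a, ha, hCa⟩ : ∃ a > 0, ∀ q ∈ C, fderiv ℝ V q.1 (f q.1 q.2) ≤ -a := by
    rcases C.eq_empty_or_nonempty with h | h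
    · exact ⟨1, one_pos, by simp [h]⟩
    · obtain ⟨q, hq, hmax⟩ := hCc.exists_isMaxOn h hcont.continuousOn
      refine ⟨-fderiv ℝ V q.1 (f q.1 q.2), neg_pos.2 (hdec _ _ ?_), fun q' hq' => ?_⟩
      · have h0 := hχ.nonneg (norm_nonneg q.2)
        have h1 := hq.2.1
        have h2 := hq.2.2
        linarith
      · rw [neg_neg]; exact hmax hq'
  refine ⟨a / 2, half_pos ha, fun ξ u hu hb hξ huS t ht => ?_⟩
  have hφ : ContinuousOn (fun t => V (x t ξ u)) (Ici 0) :=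
    hV.continuous.comp_continuousOn (hB.continuousOn hf.continuous hu hb ξ)
  have := le_max_sub_of_frequently_decreasing (half_pos ha).le hφ
    (c := max ε (2 * χ (uNorm u))) ?_ ht
  · rwa [hx.apply_zero hu] at this
  · intro s hs hcs
    refine (eventually_lyapunov_le hf hB (hV.differentiable one_ne_zero) hu hb ξ hs ha
      fun μ hμ => ?_).frequently
    refine hCa (x s ξ u, μ) ⟨⟨?_, ?_⟩, ?_, ?_⟩
    · rw [mem_closedBall_zero_iff]
      refine (hσ ξ u hu hb s hs).trans (max_le ?_ ?_)
      · exact hσK.mono (norm_nonneg _) hξ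
      · exact hσK.mono uNorm_nonneg huS
    · rw [mem_closedBall_zero_iff]
      exact hμ.trans huS
    · exact (le_max_left _ _).trans hcs
    · refine le_trans ?_ ((le_max_right _ _).trans hcs)
      exact mul_le_mul_of_nonneg_left (hχ.mono (norm_nonneg _) hμ) zero_le_two

/-- For a BIBS system, existence of a strictly decaying Lyapunov function implies IOS. -/
theorem isIOS_of_lyapunov {h : EuclideanSpace ℝ (Fin n) → EuclideanSpace ℝ (Fin p)}
    (hf : LocallyLipschitz fun q : EuclideanSpace ℝ (Fin n) × EuclideanSpace ℝ (Fin m) =>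
      f q.1 q.2) (hB : IsBIBS f x) {V : EuclideanSpace ℝ (Fin n) → ℝ} {α₁ α₂ χ : ℝ → ℝ}
    (hV : ContDiff ℝ 1 V) (hα₁ : IsClassKInfty α₁) (hα₂ : IsClassKInfty α₂) (hχ : IsClassK χ)
    (hbd : ∀ ξ, α₁ ‖h ξ‖ ≤ V ξ ∧ V ξ ≤ α₂ ‖ξ‖)
    (hdec : ∀ ξ μ, χ ‖μ‖ < V ξ → fderiv ℝ V ξ (f ξ μ) < 0) : IsIOS h x := by
  have hbound : ∀ ξ u, IsInput u → BddInput u → ∀ t, 0 ≤ t →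
      V (x t ξ u) ≤ max (2 * χ (uNorm u)) (α₂ ‖ξ‖) := by
    intro ξ u hu hb t ht
    refine le_of_forall_pos_le_add fun ε hε => ?_
    obtain ⟨a, ha, hda⟩ := exists_uniform_decay hf hB hV hχ hdec (max ‖ξ‖ (uNorm u)) hε
    refine (hda ξ u hu hb (le_max_left _ _) (le_max_right _ _) t ht).trans ?_
    have h1 := le_max_left (2 * χ (uNorm u)) (α₂ ‖ξ‖)
    have h2 := le_max_right (2 * χ (uNorm u)) (α₂ ‖ξ‖)
    have h3 : 0 ≤ χ (uNorm u) := hχ.nonneg uNorm_nonneg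
    have h4 := (hbd ξ).2
    refine max_le (max_le ?_ ?_) ?_
    · linarith
    · linarith
    · nlinarith
  set W : ℝ → ℝ → Set ℝ := fun s t => {w | w = 0 ∨ ∃ ξ u t', IsInput u ∧ BddInput u ∧
    ‖ξ‖ ≤ s ∧ uNorm u ≤ s ∧ 0 ≤ t' ∧ t ≤ t' ∧ 2 * χ (uNorm u) < V (x t' ξ u) ∧
    w = V (x t' ξ u)} with hW
  have hW0 : ∀ s t, (0:ℝ) ∈ W s t := fun s t => Or.inl rfl
  have hWle : ∀ s t, ∀ w ∈ W s t, w ≤ α₂ (max s 0) := by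
    rintro s t w (rfl | ⟨ξ, u, t', hu, hb, hξ, hus, ht'0, ht', hlt, rfl⟩)
    · exact hα₂.1.nonneg (le_max_right _ _)
    · refine ((le_max_iff.1 (hbound ξ u hu hb t' ht'0)).resolve_left hlt.not_ge).trans ?_
      exact hα₂.1.mono (norm_nonneg _) (le_max_of_le_left hξ)
  have hWbdd : ∀ s t, BddAbove (W s t) := fun s t => ⟨_, fun w hw => hWle s t w hw⟩
  set ψ : ℝ → ℝ → ℝ := fun s t => sSup (W s t) with hψ
  have hψlim : ∀ s, 0 ≤ s → Tendsto (fun t => ψ s t) atTop (𝓝 0) := by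
    intro s hs
    rw [Metric.tendsto_nhds]
    intro ε hε
    obtain ⟨a, ha, hda⟩ := exists_uniform_decay hf hB hV hχ hdec s (half_pos hε)
    filter_upwards [eventually_ge_atTop (α₂ s / a)] with t ht
    have hle : ψ s t ≤ ε / 2 := by
      refine csSup_le ⟨0, hW0 s t⟩ ?_
      rintro w (rfl | ⟨ξ, u, t', hu, hb, hξ, hus, ht'0, ht', hlt, rfl⟩)
      · positivity
      · rcases le_max_iff.1 (hda ξ u hu hb hξ hus t' ht'0) with h | h
        · exact (le_max_iff.1 h).resolve_right hlt.not_ge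
        · have h1 : α₂ s ≤ a * t' := by
            rw [mul_comm]; exact (div_le_iff₀ ha).1 (ht.trans ht')
          have h2 := (hbd ξ).2.trans (hα₂.1.mono (norm_nonneg ξ) hξ)
          linarith
    rw [Real.dist_eq, sub_zero, abs_of_nonneg (le_csSup (hWbdd s t) (hW0 s t))]
    linarith
  obtain ⟨β, hβ, hψβ⟩ := exists_isClassKL_ge (ψ := ψ) hα₂.1
    (fun s t => le_csSup (hWbdd s t) (hW0 s t))
    (fun s t hs _ => csSup_le ⟨0, hW0 s t⟩ fun w hw => by
      simpa [hs] using hWle s t w hw)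
    (fun t s s' hss => csSup_le_csSup (hWbdd s' t) ⟨0, hW0 s t⟩ (by
      rintro w (rfl | ⟨ξ, u, t', hu, hb, hξ, hus, ht'0, ht', hlt, rfl⟩)
      · exact hW0 _ _
      · exact Or.inr ⟨ξ, u, t', hu, hb, hξ.trans hss, hus.trans hss, ht'0, ht', hlt, rfl⟩))
    (fun s t t' htt => csSup_le_csSup (hWbdd s t) ⟨0, hW0 s t'⟩ (by
      rintro w (rfl | ⟨ξ, u, τ, hu, hb, hξ, hus, hτ0, hτ, hlt, rfl⟩)
      · exact hW0 _ _
      · exact Or.inr ⟨ξ, u, τ, hu, hb, hξ, hus, hτ0, htt.trans hτ, hlt, rfl⟩))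
    hψlim
  obtain ⟨κ, hκ, hκα⟩ := hα₁.exists_inverse
  have hγ : IsClassK fun r => 2 * χ r + α₂ r := (hχ.const_mul two_pos).add hα₂.1
  refine ⟨fun s t => κ (β s t), fun r => κ (2 * χ r + α₂ r), ⟨?_, ?_⟩, hκ.comp hγ, ?_⟩
  · intro t ht
    exact hκ.comp (hβ.1 t ht)
  · intro s hs
    obtain ⟨h1, h2⟩ := hβ.2 s hs
    have hnn : ∀ t, 0 ≤ t → 0 ≤ β s t := fun t ht => (hβ.1 t ht).nonneg hs
    refine ⟨fun a ha b hb hab => hκ.mono (hnn b hb) (h1 ha hb hab), ?_⟩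
    have hκ0 := hκ.1 0 self_mem_Ici
    unfold ContinuousWithinAt at hκ0
    rw [hκ.2.2] at hκ0
    refine hκ0.comp (tendsto_nhdsWithin_iff.2 ⟨h2, ?_⟩)
    filter_upwards [eventually_ge_atTop 0] with t ht using hnn t ht
  · intro ξ u hu hb t ht
    have ht : (0:ℝ) ≤ t := ht
    set r := uNorm u with hr
    have hr0 : 0 ≤ r := uNorm_nonneg
    have hχr : 0 ≤ χ r := hχ.nonneg hr0
    have hαr : 0 ≤ α₂ r := hα₂.1.nonneg hr0
    have h1 := (hbd (x t ξ u)).1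
    rcases le_or_gt (V (x t ξ u)) (2 * χ r + α₂ r) with hle | hgt
    · exact le_max_of_le_right (hκα _ _ (norm_nonneg _) (h1.trans hle))
    · refine le_max_of_le_left (hκα _ _ (norm_nonneg _) (h1.trans ?_))
      refine le_trans ?_ (hψβ ‖ξ‖ t (norm_nonneg _) ht)
      have hlt : 2 * χ r < V (x t ξ u) := by linarith
      refine le_csSup (hWbdd _ _) (Or.inr ⟨ξ, u, t, hu, hb, le_rfl, ?_, ht, le_rfl, hlt, rfl⟩)
      by_contra hcon
      push Not at hcon
      have h2 := hα₂.1.mono (norm_nonneg ξ) hcon.le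
      rcases le_max_iff.1 (hbound ξ u hu hb t ht) with h3 | h3 <;> linarith

end Sufficiency

/-! ### Smooth series -/

section SmoothSeries

variable {E : Type*} [NormedAddCommGroup E] [NormedSpace ℝ E]

/-- A series of smooth functions with bounded derivatives is smooth if its coefficients tend to
zero fast enough. -/
theorem exists_coeff_contDiff_tsum {F : ℕ → E → ℝ} (hF : ∀ k, ContDiff ℝ (⊤ : ℕ∞) (F k))
    (hb : ∀ k i, ∃ R, ∀ x, ‖iteratedFDeriv ℝ i (F k) x‖ ≤ R) :
    ∃ c : ℕ → ℝ, (∀ k, 0 < c k) ∧ ∀ a : ℕ → ℝ, (∀ᶠ k in atTop, |a k| ≤ c k) →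
      ContDiff ℝ (⊤ : ℕ∞) fun x => ∑' k, a k * F k x := by
  choose R hR using hb
  have hR0 : ∀ k i, 0 ≤ R k i := fun k i => (norm_nonneg _).trans (hR k i 0)
  have hsum0 : ∀ k, 0 ≤ ∑ i ∈ Finset.range (k + 1), R k i := fun k =>
    Finset.sum_nonneg fun i _ => hR0 k i
  refine ⟨fun k => (1 / 2) ^ k / (1 + ∑ i ∈ Finset.range (k + 1), R k i),
    fun k => div_pos (by positivity) (by linarith [hsum0 k]), fun a ha => ?_⟩
  refine contDiff_tsum_of_eventually (v := fun _ k => (1 / 2 : ℝ) ^ k)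
    (fun k => contDiff_const.mul (hF k)) (fun _ _ => summable_geometric_two) fun i _ => ?_
  rw [Nat.cofinite_eq_atTop]
  filter_upwards [ha, eventually_ge_atTop i] with k hk hik x
  have h1 : iteratedFDeriv ℝ i (fun x => a k * F k x) x = a k • iteratedFDeriv ℝ i (F k) x :=
    iteratedFDeriv_const_smul_apply (a := a k) (f := F k)
      ((hF k).of_le (by exact_mod_cast le_top)).contDiffAt
  have h2 : R k i ≤ ∑ j ∈ Finset.range (k + 1), R k j :=
    Finset.single_le_sum (f := R k) (fun j _ => hR0 k j) (Finset.mem_range.2 (by omega))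
  rw [h1, norm_smul, Real.norm_eq_abs]
  calc |a k| * ‖iteratedFDeriv ℝ i (F k) x‖
      ≤ (1 / 2) ^ k / (1 + ∑ i ∈ Finset.range (k + 1), R k i) *
        (1 + ∑ i ∈ Finset.range (k + 1), R k i) :=
        mul_le_mul hk ((hR k i x).trans (by linarith)) (norm_nonneg _)
          (div_nonneg (by positivity) (by linarith [hsum0 k]))
    _ = (1 / 2) ^ k := div_mul_cancel₀ _ (by linarith [hsum0 k])

theorem exists_norm_iteratedFDeriv_le_of_hasCompactSupport {F : E → ℝ}
    (hc : HasCompactSupport F) (hF : ContDiff ℝ (⊤ : ℕ∞) F) (i : ℕ) :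
    ∃ R, ∀ x, ‖iteratedFDeriv ℝ i F x‖ ≤ R := by
  have : BddAbove (range fun x => ‖iteratedFDeriv ℝ i F x‖) := by
    apply (hF.continuous_iteratedFDeriv
      (mod_cast le_top)).norm.bddAbove_range_of_hasCompactSupport
    exact HasCompactSupport.comp_left (hc.iteratedFDeriv i) norm_zero
  obtain ⟨R, hR⟩ := this
  exact ⟨R, fun x => hR (mem_range_self x)⟩

/-- Any sequence of smooth functions can be summed to a smooth function with coefficients
tending to zero fast enough. -/
theorem exists_coeff_contDiff_tsum_of_finiteDimensional [FiniteDimensional ℝ E] {F : ℕ → E → ℝ}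
    (hF : ∀ k, ContDiff ℝ (⊤ : ℕ∞) (F k)) :
    ∃ c : ℕ → ℝ, (∀ k, 0 < c k) ∧ ∀ a : ℕ → ℝ, (∀ k, |a k| ≤ c k) →
      ContDiff ℝ (⊤ : ℕ∞) fun x => ∑' k, a k * F k x := by
  let b : ℕ → ContDiffBump (0 : E) := fun N =>
    ⟨N + 1, N + 2, by positivity, by linarith⟩
  have hloc : ∀ N, ∃ c : ℕ → ℝ, (∀ k, 0 < c k) ∧ ∀ a : ℕ → ℝ, (∀ᶠ k in atTop, |a k| ≤ c k) →
      ContDiff ℝ (⊤ : ℕ∞) fun x => ∑' k, a k * (b N x * F k x) := by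
    intro N
    have hs : ∀ k, ContDiff ℝ (⊤ : ℕ∞) fun x => b N x * F k x := fun k =>
      (b N).contDiff.mul (hF k)
    refine exists_coeff_contDiff_tsum hs fun k i => ?_
    exact exists_norm_iteratedFDeriv_le_of_hasCompactSupport
      (b N).hasCompactSupport.mul_right (hs k) i
  choose c hc0 hc using hloc
  have hne : ∀ k : ℕ, (Finset.range (k + 1)).Nonempty := fun k => ⟨0, by simp⟩
  refine ⟨fun k => (Finset.range (k + 1)).inf' (hne k) fun N => c N k, fun k => ?_,
    fun a ha => ?_⟩
  · exact (Finset.lt_inf'_iff _).2 fun N _ => hc0 N k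
  · rw [contDiff_iff_contDiffAt]
    intro x
    obtain ⟨N, hN⟩ := exists_nat_gt ‖x‖
    have hsm : ContDiff ℝ (⊤ : ℕ∞) fun x => ∑' k, a k * (b N x * F k x) := by
      refine hc N a ?_
      filter_upwards [eventually_ge_atTop N] with k hk
      exact (ha k).trans (Finset.inf'_le _ (Finset.mem_range.2 (by omega)))
    refine hsm.contDiffAt.congr_of_eventuallyEq ?_
    have hnear : ∀ᶠ y in 𝓝 x, ‖y‖ < N := continuous_norm.continuousAt.eventually_lt
      continuousAt_const hN
    filter_upwards [hnear] with y hy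
    have : b N y = 1 := by
      refine (b N).one_of_mem_closedBall ?_
      rw [mem_closedBall_zero_iff]
      change ‖y‖ ≤ (N : ℝ) + 1
      linarith
    simp [this]

/-- On every open set `U` there is a smooth positive function, vanishing outside `U`, that is
small together with its derivative with respect to a given locally positive function. -/
theorem exists_contDiff_small [FiniteDimensional ℝ E] {U : Set E} (hU : IsOpen U) {e : E → ℝ}
    (he : ∀ ξ ∈ U, ∃ r > 0, ∃ c > 0, ∀ η ∈ Metric.ball ξ r, c ≤ e η) :
    ∃ δ : E → ℝ, ContDiff ℝ (⊤ : ℕ∞) δ ∧ (∀ ξ ∈ U, 0 < δ ξ) ∧ (∀ ξ ∉ U, δ ξ = 0) ∧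
      ∀ ξ ∈ U, δ ξ ≤ e ξ ∧ ‖fderiv ℝ δ ξ‖ ≤ e ξ := by
  rcases U.eq_empty_or_nonempty with rfl | hne
  · exact ⟨fun _ => 0, contDiff_const, by simp, by simp, by simp⟩
  have hlocal : ∀ ξ : U, ∃ (b : ContDiffBump (ξ : E)) (c : ℝ), 0 < c ∧ c ≤ 1 ∧
      Metric.closedBall (ξ : E) b.rOut ⊆ U ∧ ∀ η ∈ Metric.closedBall (ξ : E) b.rOut, c ≤ e η := by
    rintro ⟨ξ, hξ⟩
    obtain ⟨r, hr, c, hc, hce⟩ := he ξ hξ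
    obtain ⟨r', hr', hr'U⟩ := Metric.isOpen_iff.1 hU ξ hξ
    have hmin : 0 < min r r' := lt_min hr hr'
    refine ⟨⟨min r r' / 4, min r r' / 2, by positivity, by linarith⟩, min c 1,
      lt_min hc one_pos, min_le_right _ _, ?_, ?_⟩
    · refine (Metric.closedBall_subset_ball ?_).trans hr'U
      change min r r' / 2 < r'
      linarith [min_le_right r r']
    · intro η hη
      refine (min_le_left _ _).trans (hce η (Metric.closedBall_subset_ball ?_ hη))
      change min r r' / 2 < r
      linarith [min_le_left r r']
  choose b c hc0 hc1 hbU hce using hlocal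
  obtain ⟨T, hTc, hT⟩ := TopologicalSpace.isOpen_iUnion_countable
    (fun ξ : U => Metric.ball (ξ : E) (b ξ).rOut) fun _ => Metric.isOpen_ball
  have hcover : ∀ ξ ∈ U, ∃ i ∈ T, ξ ∈ Metric.ball (i : E) (b i).rOut := by
    intro ξ hξ
    have : ξ ∈ ⋃ i ∈ T, Metric.ball (i : E) (b i).rOut := by
      rw [hT]
      exact mem_iUnion.2 ⟨⟨ξ, hξ⟩, Metric.mem_ball_self (b _).rOut_pos⟩
    simpa using this
  have hTne : T.Nonempty := by
    obtain ⟨ξ, hξ⟩ := hne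
    obtain ⟨i, hi, -⟩ := hcover ξ hξ
    exact ⟨i, hi⟩
  obtain ⟨ζ, hζ⟩ := hTc.exists_eq_range hTne
  set F : ℕ → E → ℝ := fun k => b (ζ k) with hF
  have hFs : ∀ k, ContDiff ℝ (⊤ : ℕ∞) (F k) := fun k => (b (ζ k)).contDiff
  have hFn : ∀ k x, 0 ≤ F k x := fun k x => (b (ζ k)).nonneg
  obtain ⟨s, hs0, hs⟩ := exists_coeff_contDiff_tsum hFs fun k i =>
    exists_norm_iteratedFDeriv_le_of_hasCompactSupport (b (ζ k)).hasCompactSupport (hFs k) i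
  have hDb : ∀ k, ∃ B, ∀ x, ‖fderiv ℝ (F k) x‖ ≤ B := by
    intro k
    obtain ⟨B, hB⟩ := exists_norm_iteratedFDeriv_le_of_hasCompactSupport
      (b (ζ k)).hasCompactSupport (hFs k) 1
    refine ⟨B, fun x => ?_⟩
    have := hB x
    rwa [norm_iteratedFDeriv_one] at this
  choose B hB using hDb
  have hB0 : ∀ k, 0 ≤ B k := fun k => (norm_nonneg _).trans (hB k 0)
  set d : ℕ → ℝ := fun k => (1 / 2) ^ (k + 1) * c (ζ k) with hd
  have hd0 : ∀ k, 0 < d k := fun k => mul_pos (by positivity) (hc0 _)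
  set a : ℕ → ℝ := fun k => min (s k) (d k / (1 + B k)) with ha
  have hq0 : ∀ k, 0 < d k / (1 + B k) := fun k => div_pos (hd0 k) (by linarith [hB0 k])
  have ha0 : ∀ k, 0 < a k := fun k => lt_min (hs0 k) (hq0 k)
  have had : ∀ k, a k * (1 + B k) ≤ d k := fun k => by
    rw [← le_div_iff₀ (by linarith [hB0 k])]
    exact min_le_right _ _
  have hgeo : HasSum (fun k : ℕ => (1 / 2 : ℝ) ^ (k + 1)) 1 := by
    have := hasSum_geometric_two.mul_right (1 / 2 : ℝ)
    simpa [pow_succ] using this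
  have hzero : ∀ k x, x ∉ Metric.closedBall (ζ k : E) (b (ζ k)).rOut → F k x = 0 := by
    intro k x hx
    refine (b (ζ k)).zero_of_le_dist ?_
    rw [Metric.mem_closedBall, not_le] at hx
    exact hx.le
  have hDzero : ∀ k x, x ∉ Metric.closedBall (ζ k : E) (b (ζ k)).rOut → fderiv ℝ (F k) x = 0 := by
    intro k x hx
    refine fderiv_of_notMem_tsupport (𝕜 := ℝ) ?_
    rwa [(b (ζ k)).tsupport_eq]
  have hval : ∀ k, ∀ ξ ∈ U, a k * F k ξ ≤ (1 / 2) ^ (k + 1) * e ξ := by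
    intro k ξ hξ
    by_cases hk : ξ ∈ Metric.closedBall (ζ k : E) (b (ζ k)).rOut
    · have h1 : a k * F k ξ ≤ a k * (1 + B k) :=
        mul_le_mul_of_nonneg_left (by linarith [hB0 k, (b (ζ k)).le_one (x := ξ)]) (ha0 k).le
      exact h1.trans ((had k).trans (mul_le_mul_of_nonneg_left (hce _ ξ hk) (by positivity)))
    · obtain ⟨r, hr, c', hc', hce'⟩ := he ξ hξ
      have := hce' ξ (Metric.mem_ball_self hr)
      rw [hzero k ξ hk, mul_zero]
      exact mul_nonneg (by positivity) (by linarith)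
  have hDval : ∀ k, ∀ ξ ∈ U, ‖a k • fderiv ℝ (F k) ξ‖ ≤ (1 / 2) ^ (k + 1) * e ξ := by
    intro k ξ hξ
    by_cases hk : ξ ∈ Metric.closedBall (ζ k : E) (b (ζ k)).rOut
    · have h1 : ‖a k • fderiv ℝ (F k) ξ‖ ≤ a k * (1 + B k) := by
        rw [norm_smul, Real.norm_of_nonneg (ha0 k).le]
        exact mul_le_mul_of_nonneg_left (by linarith [hB k ξ]) (ha0 k).le
      exact h1.trans ((had k).trans (mul_le_mul_of_nonneg_left (hce _ ξ hk) (by positivity)))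
    · obtain ⟨r, hr, c', hc', hce'⟩ := he ξ hξ
      have := hce' ξ (Metric.mem_ball_self hr)
      rw [hDzero k ξ hk, smul_zero, norm_zero]
      exact mul_nonneg (by positivity) (by linarith)
  have hDF : ∀ k x, fderiv ℝ (fun y => a k * F k y) x = a k • fderiv ℝ (F k) x := fun k x =>
    fderiv_const_mul ((hFs k).differentiable (by simp) x) _
  have hsummable : ∀ x, Summable fun k => a k * F k x := by
    intro x
    refine Summable.of_nonneg_of_le (fun k => mul_nonneg (ha0 k).le (hFn k x)) (fun k => ?_)
      hgeo.summable
    have h1 : a k * F k x ≤ a k * (1 + B k) :=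
      mul_le_mul_of_nonneg_left (by linarith [hB0 k, (b (ζ k)).le_one (x := x)]) (ha0 k).le
    exact h1.trans ((had k).trans (mul_le_of_le_one_right (by positivity) (hc1 _)))
  have hfd : (fderiv ℝ fun y => ∑' k, a k * F k y) =
      fun x => ∑' k, fderiv ℝ (fun y => a k * F k y) x := by
    refine fderiv_tsum (x₀ := 0) hgeo.summable
      (fun k => ((hFs k).differentiable (by simp)).const_mul _) (fun k x => ?_) (hsummable 0)
    rw [hDF, norm_smul, Real.norm_of_nonneg (ha0 k).le]
    have h1 : a k * ‖fderiv ℝ (F k) x‖ ≤ a k * (1 + B k) :=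
      mul_le_mul_of_nonneg_left (by linarith [hB k x]) (ha0 k).le
    exact h1.trans ((had k).trans (mul_le_of_le_one_right (by positivity) (hc1 _)))
  refine ⟨fun x => ∑' k, a k * F k x, hs a (Eventually.of_forall fun k => ?_), ?_, ?_, ?_⟩
  · rw [abs_of_pos (ha0 k)]
    exact min_le_left _ _
  · intro ξ hξ
    obtain ⟨i, hi, hiξ⟩ := hcover ξ hξ
    rw [hζ] at hi
    obtain ⟨k, rfl⟩ := hi
    exact (hsummable ξ).tsum_pos (fun k => mul_nonneg (ha0 k).le (hFn k ξ)) k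
      (mul_pos (ha0 k) ((b (ζ k)).pos_of_mem_ball hiξ))
  · intro ξ hξ
    have : ∀ k, a k * F k ξ = 0 := fun k => by
      rw [hzero k ξ fun h => hξ (hbU _ h), mul_zero]
    simp [this]
  · intro ξ hξ
    have hge : HasSum (fun k : ℕ => (1 / 2 : ℝ) ^ (k + 1) * e ξ) (e ξ) := by
      simpa using hgeo.mul_right (e ξ)
    refine ⟨hasSum_le (fun k => hval k ξ hξ) (hsummable ξ).hasSum hge, ?_⟩
    rw [hfd]
    refine tsum_of_norm_bounded hge fun k => ?_
    rw [hDF]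
    exact hDval k ξ hξ

end SmoothSeries

/-! ### Mollification with variable radius -/

section Mollify

open scoped Convolution

variable {E : Type*} [NormedAddCommGroup E] [InnerProductSpace ℝ E] [FiniteDimensional ℝ E]
  [MeasurableSpace E] [BorelSpace E]

/-- The standard mollifier, supported in the unit ball. -/
def unitBump (E : Type*) [NormedAddCommGroup E] [InnerProductSpace ℝ E] : ContDiffBump (0 : E) :=
  ⟨1 / 2, 1, by norm_num, by norm_num⟩

/-- The average of `k` against the standard mollifier. -/
def mollAvg (k : E → ℝ) : ℝ := ∫ z, (unitBump E).normed volume z * k z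

theorem integrable_mollAvg {k : E → ℝ} (hk : Continuous k) :
    Integrable fun z => (unitBump E).normed volume z * k z :=
  (((unitBump E).continuous_normed).mul hk).integrable_of_hasCompactSupport
    (unitBump E).hasCompactSupport_normed.mul_right

theorem unitBump_normed_eq_zero {z : E} (hz : 1 < ‖z‖) : (unitBump E).normed volume z = 0 := by
  have : z ∉ Function.support ((unitBump E).normed volume) := by
    rw [(unitBump E).support_normed_eq, mem_ball_zero_iff]
    exact hz.not_gt
  simpa using this

theorem mollAvg_mono {k l : E → ℝ} (hk : Continuous k) (hl : Continuous l) {c : ℝ}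
    (h : ∀ z, ‖z‖ ≤ 1 → k z ≤ l z + c) : mollAvg k ≤ mollAvg l + c := by
  have h1 : mollAvg (fun z => l z + c) = mollAvg l + c := by
    unfold mollAvg
    simp_rw [mul_add]
    rw [integral_add (integrable_mollAvg hl) (integrable_mollAvg continuous_const),
      integral_mul_const, (unitBump E).integral_normed, one_mul]
  rw [← h1]
  refine integral_mono (integrable_mollAvg hk) (integrable_mollAvg (by fun_prop)) fun z => ?_
  rcases le_or_gt ‖z‖ 1 with hz | hz
  · exact mul_le_mul_of_nonneg_left (h z hz) ((unitBump E).nonneg_normed z)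
  · simp [unitBump_normed_eq_zero hz]

theorem mollAvg_const (c : ℝ) : mollAvg (fun _ : E => c) = c := by
  unfold mollAvg
  rw [integral_mul_const, (unitBump E).integral_normed, one_mul]

/-- Mollification with smooth variable radius yields a smooth function. -/
theorem contDiffOn_mollAvg {W δ : E → ℝ} (hW : Continuous W) (hδ : ContDiff ℝ (⊤ : ℕ∞) δ)
    (hδ1 : ∀ ξ, δ ξ ≤ 1) :
    ContDiffOn ℝ (⊤ : ℕ∞) (fun ξ => mollAvg fun z => W (ξ - δ ξ • z)) {ξ | 0 < δ ξ} := by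
  set s : Set E := {ξ | 0 < δ ξ} with hs
  have hso : IsOpen s := isOpen_lt continuous_const hδ.continuous
  set G : E → E → ℝ := fun p z =>
    ((δ p) ^ Module.finrank ℝ E)⁻¹ * (unitBump E).normed volume ((δ p)⁻¹ • z) with hG
  have hGs : ∀ p, ∀ z, p ∈ s → z ∉ Metric.closedBall (0 : E) 1 → G p z = 0 := by
    intro p z hp hz
    rw [mem_closedBall_zero_iff, not_le] at hz
    have hp : 0 < δ p := hp
    have : 1 < ‖(δ p)⁻¹ • z‖ := by
      rw [norm_smul, Real.norm_of_nonneg (inv_pos.2 hp).le]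
      exact one_lt_mul_of_le_of_lt ((one_le_inv₀ hp).2 (hδ1 p)) hz
    simp [hG, unitBump_normed_eq_zero this]
  have hGd : ContDiffOn ℝ (⊤ : ℕ∞) (Function.uncurry G) (s ×ˢ univ) := by
    have h1 : ContDiffOn ℝ (⊤ : ℕ∞) (fun q : E × E => δ q.1) (s ×ˢ univ) :=
      (hδ.comp contDiff_fst).contDiffOn
    have hne : ∀ q ∈ s ×ˢ (univ : Set E), δ q.1 ≠ 0 := fun q hq => ne_of_gt hq.1
    refine ContDiffOn.mul ((h1.pow _).inv fun q hq => pow_ne_zero _ (hne q hq)) ?_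
    refine ((unitBump E).contDiff_normed (n := (⊤ : ℕ∞))).comp_contDiffOn ?_
    exact (h1.inv hne).smul contDiff_snd.contDiffOn
  have hconv := contDiffOn_convolution_right_with_param_comp (μ := volume)
    (ContinuousLinearMap.mul ℝ ℝ) (contDiffOn_id (s := s)) hso (isCompact_closedBall (0 : E) 1)
    hGs hW.locallyIntegrable hGd
  refine hconv.congr fun ξ hξ => ?_
  have hξ : 0 < δ ξ := hξ
  rw [id, convolution_eq_swap]
  have hcomp := Measure.integral_comp_inv_smul volume
    (fun z => (unitBump E).normed volume z * W (ξ - δ ξ • z)) (δ ξ)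
  have h2 : ∀ z : E, (ContinuousLinearMap.mul ℝ ℝ) (W (ξ - z)) (G ξ z) =
      ((δ ξ) ^ Module.finrank ℝ E)⁻¹ * ((unitBump E).normed volume ((δ ξ)⁻¹ • z) *
        W (ξ - δ ξ • (δ ξ)⁻¹ • z)) := by
    intro z
    rw [smul_inv_smul₀ hξ.ne', ContinuousLinearMap.mul_apply', hG]
    ring
  simp_rw [h2]
  rw [integral_const_mul, hcomp, abs_of_pos (by positivity), smul_eq_mul,
    inv_mul_cancel_left₀ (by positivity)]
  rfl

end Mollify

/-! ### A locally Lipschitz Lyapunov function -/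

/-- The part of the output magnitude `y` which exceeds the gain of an input of size `r`. -/
def outputExcess (γ : ℝ → ℝ) (y r : ℝ) : ℝ := min y (max 0 (2 * (y - γ r)))

/-- An increasing weight with values in `[1, 2]`. -/
def timeWeight (t : ℝ) : ℝ := 2 - 1 / (1 + t)

section Weights

variable {γ : ℝ → ℝ} {y r : ℝ}

theorem outputExcess_le : outputExcess γ y r ≤ y := min_le_left _ _

theorem outputExcess_nonneg (hy : 0 ≤ y) : 0 ≤ outputExcess γ y r :=
  le_min hy (le_max_left _ _)

theorem lt_of_outputExcess_pos (h : 0 < outputExcess γ y r) : γ r < y := by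
  have h1 : 0 < max 0 (2 * (y - γ r)) := h.trans_le (min_le_right _ _)
  have h2 : 0 < 2 * (y - γ r) := by simpa using h1
  linarith

theorem outputExcess_eq (h : 2 * γ r ≤ y) : outputExcess γ y r = y :=
  min_eq_left (le_max_of_le_right (by linarith))

theorem outputExcess_le_add (y z r : ℝ) :
    outputExcess γ y r ≤ outputExcess γ z r + 2 * |y - z| := by
  have h1 := le_abs_self (y - z)
  have h2 := abs_nonneg (y - z)
  unfold outputExcess
  rw [← min_add_add_right, ← max_add_add_right]
  exact min_le_min (by linarith) (max_le_max (by linarith) (by linarith))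

theorem one_le_timeWeight {t : ℝ} (ht : 0 ≤ t) : 1 ≤ timeWeight t := by
  have : 1 / (1 + t) ≤ 1 := by
    rw [div_le_one (by linarith)]
    linarith
  unfold timeWeight
  linarith

theorem timeWeight_le_two {t : ℝ} (ht : 0 ≤ t) : timeWeight t ≤ 2 := by
  have : 0 ≤ 1 / (1 + t) := by positivity
  unfold timeWeight
  linarith

theorem timeWeight_zero : timeWeight 0 = 1 := by norm_num [timeWeight]

theorem timeWeight_le_mul {s t T : ℝ} (ht : 0 ≤ t) (htT : t ≤ T) (hs : 0 ≤ s) (hs1 : s ≤ 1) :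
    timeWeight t ≤ timeWeight (t + s) * (1 - 1 / (2 * (T + 2) ^ 2) * s) := by
  have h1 : timeWeight (t + s) - timeWeight t = s / ((1 + t) * (1 + (t + s))) := by
    unfold timeWeight
    field_simp
    ring
  have h2 : s / (T + 2) ^ 2 ≤ s / ((1 + t) * (1 + (t + s))) :=
    div_le_div_of_nonneg_left hs (by positivity) (by nlinarith)
  have h3 : timeWeight (t + s) * (1 / (2 * (T + 2) ^ 2) * s) ≤
      2 * (1 / (2 * (T + 2) ^ 2) * s) :=
    mul_le_mul_of_nonneg_right (timeWeight_le_two (by positivity))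
      (mul_nonneg (by positivity) hs)
  have h4 : 2 * (1 / (2 * (T + 2) ^ 2) * s) = s / (T + 2) ^ 2 := by
    have : (T + 2) ≠ 0 := by linarith
    field_simp
  rw [mul_sub, mul_one]
  linarith

end Weights

section SupLyapunov

variable {n m p : ℕ}
  {f : EuclideanSpace ℝ (Fin n) → EuclideanSpace ℝ (Fin m) → EuclideanSpace ℝ (Fin n)}
  {h : EuclideanSpace ℝ (Fin n) → EuclideanSpace ℝ (Fin p)}
  {x : ℝ → EuclideanSpace ℝ (Fin n) → (ℝ → EuclideanSpace ℝ (Fin m)) → EuclideanSpace ℝ (Fin n)}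
  {β : ℝ → ℝ → ℝ} {γ : ℝ → ℝ}

/-- The weighted output excesses along all trajectories starting at `ξ`. -/
def excessSet (γ : ℝ → ℝ) (h : EuclideanSpace ℝ (Fin n) → EuclideanSpace ℝ (Fin p))
    (x : ℝ → EuclideanSpace ℝ (Fin n) → (ℝ → EuclideanSpace ℝ (Fin m)) →
      EuclideanSpace ℝ (Fin n)) (ξ : EuclideanSpace ℝ (Fin n)) : Set ℝ :=
  {v | ∃ t r u, 0 ≤ t ∧ Measurable u ∧ (∀ s, ‖u s‖ ≤ r) ∧
    v = outputExcess γ ‖h (x t ξ u)‖ r * timeWeight t}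

/-- The supremum of the weighted output excesses along all trajectories starting at `ξ`. -/
def supLyapunov (γ : ℝ → ℝ) (h : EuclideanSpace ℝ (Fin n) → EuclideanSpace ℝ (Fin p))
    (x : ℝ → EuclideanSpace ℝ (Fin n) → (ℝ → EuclideanSpace ℝ (Fin m)) →
      EuclideanSpace ℝ (Fin n)) (ξ : EuclideanSpace ℝ (Fin n)) : ℝ :=
  sSup (excessSet γ h x ξ)

/-- The output estimate in the definition of input-to-output stability, for measurable inputs
bounded everywhere by `r`, with a gain that dominates the identity. -/
structure OutputEstimate (h : EuclideanSpace ℝ (Fin n) → EuclideanSpace ℝ (Fin p))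
    (x : ℝ → EuclideanSpace ℝ (Fin n) → (ℝ → EuclideanSpace ℝ (Fin m)) →
      EuclideanSpace ℝ (Fin n)) (β : ℝ → ℝ → ℝ) (γ : ℝ → ℝ) : Prop where
  isClassKL : IsClassKL β
  isClassK : IsClassK γ
  le_gain : ∀ r, 0 ≤ r → r ≤ γ r
  norm_le : ∀ ξ u r t, Measurable u → (∀ s, ‖u s‖ ≤ r) → 0 ≤ t →
    ‖h (x t ξ u)‖ ≤ max (β ‖ξ‖ t) (γ r)

namespace OutputEstimate

theorem le_beta (H : OutputEstimate h x β γ) {ξ : EuclideanSpace ℝ (Fin n)}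
    {u : ℝ → EuclideanSpace ℝ (Fin m)} {r t : ℝ} (hu : Measurable u) (hr : ∀ s, ‖u s‖ ≤ r)
    (ht : 0 ≤ t) : outputExcess γ ‖h (x t ξ u)‖ r ≤ β ‖ξ‖ t := by
  rcases le_or_gt (outputExcess γ ‖h (x t ξ u)‖ r) 0 with h0 | h0
  · exact h0.trans ((H.isClassKL.1 t ht).nonneg (norm_nonneg ξ))
  · have h1 := lt_of_outputExcess_pos h0
    rcases le_max_iff.1 (H.norm_le ξ u r t hu hr ht) with h2 | h2
    · exact outputExcess_le.trans h2
    · linarith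

theorem beta_mono (H : OutputEstimate h x β γ) {s s' t t' : ℝ} (hs : 0 ≤ s) (hss : s ≤ s')
    (ht : 0 ≤ t') (htt : t' ≤ t) : β s t ≤ β s' t' :=
  ((H.isClassKL.1 t (ht.trans htt)).mono hs hss).trans
    ((H.isClassKL.2 s' (hs.trans hss)).1 (mem_Ici.2 ht) (mem_Ici.2 (ht.trans htt)) htt)

theorem weighted_le (H : OutputEstimate h x β γ) {ξ : EuclideanSpace ℝ (Fin n)}
    {u : ℝ → EuclideanSpace ℝ (Fin m)} {r t : ℝ} (hu : Measurable u) (hr : ∀ s, ‖u s‖ ≤ r)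
    (ht : 0 ≤ t) : outputExcess γ ‖h (x t ξ u)‖ r * timeWeight t ≤ 2 * β ‖ξ‖ t := by
  rw [mul_comm 2]
  exact mul_le_mul (H.le_beta hu hr ht) (timeWeight_le_two ht)
    (zero_le_one.trans (one_le_timeWeight ht)) ((H.isClassKL.1 t ht).nonneg (norm_nonneg ξ))

theorem mem_upperBounds (H : OutputEstimate h x β γ) (ξ : EuclideanSpace ℝ (Fin n)) :
    2 * β ‖ξ‖ 0 ∈ upperBounds (excessSet γ h x ξ) := by
  rintro _ ⟨t, r, u, ht, hu, hr, rfl⟩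
  exact (H.weighted_le hu hr ht).trans
    (mul_le_mul_of_nonneg_left (H.beta_mono (norm_nonneg ξ) le_rfl le_rfl ht) zero_le_two)

theorem weighted_le_supLyapunov (H : OutputEstimate h x β γ) {ξ : EuclideanSpace ℝ (Fin n)}
    {u : ℝ → EuclideanSpace ℝ (Fin m)} {r t : ℝ} (hu : Measurable u) (hr : ∀ s, ‖u s‖ ≤ r)
    (ht : 0 ≤ t) : outputExcess γ ‖h (x t ξ u)‖ r * timeWeight t ≤ supLyapunov γ h x ξ :=
  le_csSup ⟨_, H.mem_upperBounds ξ⟩ ⟨t, r, u, ht, hu, hr, rfl⟩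

theorem supLyapunov_le {ξ : EuclideanSpace ℝ (Fin n)} {c : ℝ}
    (hc : ∀ t r u, 0 ≤ t → Measurable u → (∀ s, ‖u s‖ ≤ r) →
      outputExcess γ ‖h (x t ξ u)‖ r * timeWeight t ≤ c) : supLyapunov γ h x ξ ≤ c := by
  refine csSup_le ⟨_, 0, 0, fun _ => 0, le_rfl, measurable_const, fun _ => by simp, rfl⟩ ?_
  rintro _ ⟨t, r, u, ht, hu, hr, rfl⟩
  exact hc t r u ht hu hr

theorem supLyapunov_le_beta (H : OutputEstimate h x β γ) (ξ : EuclideanSpace ℝ (Fin n)) :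
    supLyapunov γ h x ξ ≤ 2 * β ‖ξ‖ 0 :=
  supLyapunov_le fun t r u ht hu hr => H.mem_upperBounds ξ ⟨t, r, u, ht, hu, hr, rfl⟩

theorem norm_le_supLyapunov (H : OutputEstimate h x β γ) (hx : IsSolutionMap f x)
    (ξ : EuclideanSpace ℝ (Fin n)) : ‖h ξ‖ ≤ supLyapunov γ h x ξ := by
  have hr : ∀ _ : ℝ, ‖(0 : EuclideanSpace ℝ (Fin m))‖ ≤ 0 := fun _ => by simp
  have h1 := H.weighted_le_supLyapunov (ξ := ξ) measurable_const hr le_rfl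
  rwa [hx.apply_zero (isInput_of_forall measurable_const hr), timeWeight_zero, mul_one,
    outputExcess_eq (by simp [H.isClassK.2.2])] at h1

theorem exists_two_mul_beta_le (H : OutputEstimate h x β γ) {R ε : ℝ} (hR : 0 ≤ R)
    (hε : 0 < ε) : ∃ T, 0 ≤ T ∧ ∀ s t, 0 ≤ s → s ≤ R → T ≤ t → 2 * β s t ≤ ε := by
  have h1 := (H.isClassKL.2 R hR).2.eventually_lt_const (half_pos hε)
  obtain ⟨T, hT, hT0⟩ := (h1.and (eventually_ge_atTop 0)).exists
  exact ⟨T, hT0, fun s t hs hsR htT => by linarith [H.beta_mono hs hsR hT0 htT]⟩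

/-- Above every positive level, `supLyapunov` is Lipschitz on bounded sets. -/
theorem exists_lipschitz_supLyapunov (H : OutputEstimate h x β γ)
    (hf : LocallyLipschitz fun q : EuclideanSpace ℝ (Fin n) × EuclideanSpace ℝ (Fin m) =>
      f q.1 q.2) (hh : LocallyLipschitz h) (hB : IsBIBS f x) {R ε : ℝ} (hR : 0 ≤ R)
    (hε : 0 < ε) : ∃ L, 0 ≤ L ∧ ∀ ξ η, ‖ξ‖ ≤ R → ‖η‖ ≤ R →
      supLyapunov γ h x ξ ≤ max (supLyapunov γ h x η) ε + L * ‖ξ - η‖ := by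
  obtain ⟨σ, hσK, hσ⟩ := hB.2
  obtain ⟨T, hT0, hT⟩ := H.exists_two_mul_beta_le hR hε
  set ρ := β R 0
  set R' := max (σ R) (σ ρ)
  obtain ⟨K, hK0, hK⟩ := exists_lipschitz_const hf R' ρ
  obtain ⟨Kh, hKh0, hKh⟩ := exists_lipschitz_const (f := fun a (_ : ℝ) => h a)
    (hh.comp LipschitzWith.prod_fst.locallyLipschitz) R' 0
  refine ⟨4 * (Kh * Real.exp (K * T)), by positivity, fun ξ η hξ hη =>
    supLyapunov_le fun t r u ht hu hr => ?_⟩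
  have hLnn : 0 ≤ 4 * (Kh * Real.exp (K * T)) * ‖ξ - η‖ := by positivity
  set J := outputExcess γ ‖h (x t ξ u)‖ r * timeWeight t with hJ
  rcases le_or_gt J ε with hJε | hJε
  · exact (hJε.trans (le_max_right _ _)).trans (le_add_of_nonneg_right hLnn)
  have htT : t ≤ T := by
    by_contra! htT
    linarith [hT ‖ξ‖ t (norm_nonneg ξ) hξ htT.le, H.weighted_le (ξ := ξ) hu hr ht]
  have hk0 : 0 < timeWeight t := zero_lt_one.trans_le (one_le_timeWeight ht)
  have hG : 0 < outputExcess γ ‖h (x t ξ u)‖ r := pos_of_mul_pos_left (hε.trans hJε) hk0.le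
  have hr0 : 0 ≤ r := (norm_nonneg _).trans (hr 0)
  have hrρ : r ≤ ρ := by
    have h1 := lt_of_outputExcess_pos hG
    have h2 := H.le_gain r hr0
    rcases le_max_iff.1 (H.norm_le ξ u r t hu hr ht) with h3 | h3
    · linarith [H.beta_mono (norm_nonneg ξ) hξ le_rfl ht]
    · linarith
  have huI := isInput_of_forall hu hr
  have hub := bddInput_of_forall hr
  have hbd : ∀ a : EuclideanSpace ℝ (Fin n), ‖a‖ ≤ R → ∀ s, 0 ≤ s → ‖x s a u‖ ≤ R' :=
    fun a ha s hs => (hσ a u huI hub s hs).trans (max_le_max (hσK.mono (norm_nonneg a) ha)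
      (hσK.mono uNorm_nonneg ((uNorm_le_of_forall hr).trans hrρ)))
  have hXY : ‖x t ξ u - x t η u‖ ≤ ‖ξ - η‖ * Real.exp (K * t) :=
    (hB.isSolutionOn hf.continuous huI hub ξ ht).norm_sub_le
      (hB.isSolutionOn hf.continuous huI hub η ht) (Eventually.of_forall fun _ => rfl)
      (Eventually.of_forall fun s => (hr s).trans hrρ) hK0 hK
      (fun s hs => hbd ξ hξ s hs.1) (fun s hs => hbd η hη s hs.1) ⟨ht, le_rfl⟩
  have hexp : ‖ξ - η‖ * Real.exp (K * t) ≤ ‖ξ - η‖ * Real.exp (K * T) := by gcongr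
  have hhd : |‖h (x t ξ u)‖ - ‖h (x t η u)‖| ≤ Kh * (‖ξ - η‖ * Real.exp (K * T)) :=
    (abs_norm_sub_norm_le _ _).trans ((hKh _ _ 0 (hbd ξ hξ t ht) (hbd η hη t ht)
      (by simp)).trans (mul_le_mul_of_nonneg_left (hXY.trans hexp) hKh0))
  have hGd := outputExcess_le_add (γ := γ) ‖h (x t ξ u)‖ ‖h (x t η u)‖ r
  have hη' := H.weighted_le_supLyapunov (ξ := η) hu hr ht
  have hD0 : 0 ≤ Kh * (‖ξ - η‖ * Real.exp (K * T)) := by positivity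
  calc J ≤ (outputExcess γ ‖h (x t η u)‖ r + 2 * (Kh * (‖ξ - η‖ * Real.exp (K * T)))) *
        timeWeight t := mul_le_mul_of_nonneg_right (by linarith) hk0.le
    _ = outputExcess γ ‖h (x t η u)‖ r * timeWeight t +
        2 * (Kh * (‖ξ - η‖ * Real.exp (K * T))) * timeWeight t := by ring
    _ ≤ supLyapunov γ h x η + 2 * (Kh * (‖ξ - η‖ * Real.exp (K * T))) * 2 :=
        add_le_add hη' (mul_le_mul_of_nonneg_left (timeWeight_le_two ht) (by positivity))
    _ ≤ max (supLyapunov γ h x η) ε + 2 * (Kh * (‖ξ - η‖ * Real.exp (K * T))) * 2 := by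
        gcongr
        exact le_max_left _ _
    _ = _ := by ring

theorem continuous_supLyapunov (H : OutputEstimate h x β γ)
    (hf : LocallyLipschitz fun q : EuclideanSpace ℝ (Fin n) × EuclideanSpace ℝ (Fin m) =>
      f q.1 q.2) (hh : LocallyLipschitz h) (hB : IsBIBS f x) :
    Continuous (supLyapunov γ h x) := by
  have hnn : ∀ ξ, 0 ≤ supLyapunov γ h x ξ := fun ξ =>
    (norm_nonneg _).trans (H.norm_le_supLyapunov hB.1 ξ)
  refine Metric.continuous_iff.2 fun ξ e he => ?_
  obtain ⟨L, hL0, hL⟩ := H.exists_lipschitz_supLyapunov hf hh hB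
    (R := ‖ξ‖ + 1) (by positivity) (half_pos he)
  refine ⟨min 1 (e / 2 / (L + 1)), by positivity, fun η hη => ?_⟩
  have hd : ‖η - ξ‖ < min 1 (e / 2 / (L + 1)) := by rwa [← dist_eq_norm]
  have hηR : ‖η‖ ≤ ‖ξ‖ + 1 := by
    have := norm_le_norm_add_norm_sub' η ξ
    linarith [hd.trans_le (min_le_left _ _)]
  have hLd : L * ‖η - ξ‖ < e / 2 := by
    have h1 := hd.trans_le (min_le_right _ _)
    rw [lt_div_iff₀ (by linarith)] at h1
    nlinarith [norm_nonneg (η - ξ)]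
  have h1 := hL η ξ hηR (by linarith)
  have h2 := hL ξ η (by linarith) hηR
  rw [norm_sub_rev] at h2
  have h3 : ∀ a, 0 ≤ a → max a (e / 2) ≤ a + e / 2 := fun a ha =>
    max_le (by linarith) (by linarith)
  rw [Real.dist_eq, abs_lt]
  constructor <;> linarith [h3 _ (hnn ξ), h3 _ (hnn η)]

/-- Above every positive level, `supLyapunov` decays at a uniform rate along trajectories with
small constant inputs starting in bounded sets. -/
theorem exists_decay_supLyapunov (H : OutputEstimate h x β γ)
    (hf : LocallyLipschitz fun q : EuclideanSpace ℝ (Fin n) × EuclideanSpace ℝ (Fin m) =>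
      f q.1 q.2) (hB : IsBIBS f x) {R ε : ℝ} (hR : 0 ≤ R) (hε : 0 < ε) :
    ∃ a, 0 < a ∧ ∀ ζ μ s, ‖ζ‖ ≤ R → 4 * γ ‖μ‖ ≤ ε → 0 ≤ s → s ≤ 1 →
      supLyapunov γ h x (x s ζ fun _ => μ) ≤ max ε (supLyapunov γ h x ζ * (1 - a * s)) := by
  obtain ⟨σ, hσK, hσ⟩ := hB.2
  set R' := max (σ R) (σ ε)
  have hR' : 0 ≤ R' := (hσK.nonneg hR).trans (le_max_left _ _)
  obtain ⟨T, hT0, hT⟩ := H.exists_two_mul_beta_le hR' hε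
  refine ⟨1 / (2 * (T + 2) ^ 2), by positivity, fun ζ μ s hζ hμ hs hs1 =>
    supLyapunov_le fun t r v ht hv hr => ?_⟩
  have hμr : ∀ _ : ℝ, ‖μ‖ ≤ ‖μ‖ := fun _ => le_rfl
  have hμm : Measurable fun _ : ℝ => μ := measurable_const
  have hμε : ‖μ‖ ≤ ε := by linarith [H.le_gain _ (norm_nonneg μ), norm_nonneg μ]
  have hxR : ‖x s ζ fun _ => μ‖ ≤ R' :=
    (hσ ζ _ (isInput_of_forall hμm hμr) (bddInput_of_forall hμr) s hs).trans
      (max_le_max (hσK.mono (norm_nonneg ζ) hζ)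
        (hσK.mono uNorm_nonneg ((uNorm_le_of_forall hμr).trans hμε)))
  set q := x s ζ fun _ => μ
  set y := ‖h (x t q v)‖ with hy
  rcases le_or_gt (outputExcess γ y r * timeWeight t) ε with hJε | hJε
  · exact hJε.trans (le_max_left _ _)
  refine le_max_of_le_right ?_
  have htT : t ≤ T := by
    by_contra! htT
    linarith [hT ‖q‖ t (norm_nonneg q) hxR htT.le, H.weighted_le (ξ := q) hv hr ht]
  have hk0 : 0 < timeWeight t := zero_lt_one.trans_le (one_le_timeWeight ht)
  have hy0 : 0 ≤ y := norm_nonneg _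
  have hGε : ε / 2 < outputExcess γ y r := by
    have := mul_le_mul_of_nonneg_left (timeWeight_le_two ht)
      (outputExcess_nonneg (γ := γ) (r := r) hy0)
    linarith
  have hG : outputExcess γ y r ≤ outputExcess γ y (max r ‖μ‖) := by
    rcases le_total ‖μ‖ r with hrμ | hrμ
    · rw [max_eq_left hrμ]
    · rw [max_eq_right hrμ, outputExcess_eq (r := ‖μ‖)]
      · exact outputExcess_le
      · linarith [outputExcess_le (γ := γ) (y := y) (r := r)]
  have hvr : ∀ τ, ‖v τ‖ ≤ max r ‖μ‖ := fun τ => (hr τ).trans (le_max_left _ _)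
  have hμr' : ∀ _ : ℝ, ‖μ‖ ≤ max r ‖μ‖ := fun _ => le_max_right _ _
  have hconc := hB.apply_concatInput hf hμm hv hμr' hvr ζ hs ht
  have hval := H.weighted_le_supLyapunov (ξ := ζ) (t := t + s)
    (measurable_concatInput (τ := s) hμm hv) (norm_concatInput_le hμr' hvr) (by positivity)
  rw [hconc] at hval
  have hfac : 0 ≤ 1 - 1 / (2 * (T + 2) ^ 2) * s := by
    have h1 : 1 / (2 * (T + 2) ^ 2) ≤ 1 := by
      rw [div_le_one (by positivity)]
      nlinarith
    have h2 : 1 / (2 * (T + 2) ^ 2) * s ≤ 1 := mul_le_one₀ h1 hs hs1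
    linarith
  calc outputExcess γ y r * timeWeight t
      ≤ outputExcess γ y (max r ‖μ‖) *
        (timeWeight (t + s) * (1 - 1 / (2 * (T + 2) ^ 2) * s)) :=
        mul_le_mul hG (timeWeight_le_mul ht htT hs hs1) hk0.le (outputExcess_nonneg hy0)
    _ = outputExcess γ y (max r ‖μ‖) * timeWeight (t + s) *
        (1 - 1 / (2 * (T + 2) ^ 2) * s) := by ring
    _ ≤ _ := mul_le_mul_of_nonneg_right hval hfac

end OutputEstimate

theorem IsIOS.exists_outputEstimate (hI : IsIOS h x) :
    ∃ β γ, OutputEstimate h x β γ := by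
  obtain ⟨β, γ, hβ, hγ, hI⟩ := hI
  refine ⟨β, fun r => γ r + r, hβ, hγ.add_id.1, fun r hr => by linarith [hγ.nonneg hr],
    fun ξ u r t hu hr ht => ?_⟩
  have hr0 : 0 ≤ r := (norm_nonneg _).trans (hr 0)
  refine (hI ξ u (isInput_of_forall hu hr) (bddInput_of_forall hr) t ht).trans
    (max_le_max le_rfl ?_)
  have := hγ.mono uNorm_nonneg (uNorm_le_of_forall hr)
  linarith

end SupLyapunov

/-! ### Smoothing away from the zero set -/

section

variable {E : Type*} [NormedAddCommGroup E] [NormedSpace ℝ E]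

/-- A locally uniform smallness condition on a function and its derivative can be met by a smooth
function which is positive on `U` and vanishes outside `U`. -/
theorem exists_contDiff_of_antitone [FiniteDimensional ℝ E] {U : Set E} (hU : IsOpen U)
    {P : E → ℝ → Prop} (hP : ∀ ξ, ∀ c c', 0 < c' → c' ≤ c → P ξ c → P ξ c')
    (hloc : ∀ ξ ∈ U, ∃ r > 0, ∃ c > 0, ∀ η ∈ Metric.ball ξ r, P η c) :
    ∃ δ : E → ℝ, ContDiff ℝ (⊤ : ℕ∞) δ ∧ (∀ ξ ∈ U, 0 < δ ξ) ∧ (∀ ξ ∉ U, δ ξ = 0) ∧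
      (∀ ξ, δ ξ ≤ 1) ∧ ∀ ξ ∈ U, ∃ c > 0, P ξ c ∧ δ ξ ≤ c ∧ ‖fderiv ℝ δ ξ‖ ≤ c := by
  set S : E → Set ℝ := fun ξ => {c | 0 < c ∧ c ≤ 1 ∧ P ξ c} with hS
  have hbdd : ∀ ξ, BddAbove (S ξ) := fun ξ => ⟨1, fun c hc => hc.2.1⟩
  have hle : ∀ ξ ∈ U, ∃ r > 0, ∃ c > 0, ∀ η ∈ Metric.ball ξ r, c ∈ S η := by
    intro ξ hξ
    obtain ⟨r, hr, c, hc, hcP⟩ := hloc ξ hξ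
    have hc1 : 0 < min c 1 := lt_min hc one_pos
    exact ⟨r, hr, min c 1, hc1, fun η hη => ⟨hc1, min_le_right _ _,
      hP η c _ hc1 (min_le_left _ _) (hcP η hη)⟩⟩
  obtain ⟨δ, hδ, hδpos, hδzero, hδle⟩ := exists_contDiff_small hU
    (e := fun ξ => sSup (S ξ) / 2) fun ξ hξ => by
      obtain ⟨r, hr, c, hc, hcS⟩ := hle ξ hξ
      exact ⟨r, hr, c / 2, half_pos hc, fun η hη => by
        linarith [le_csSup (hbdd η) (hcS η hη)]⟩
  have hmem : ∀ ξ ∈ U, ∃ c, c ∈ S ξ ∧ 0 < sSup (S ξ) / 2 ∧ sSup (S ξ) / 2 < c := by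
    intro ξ hξ
    obtain ⟨r, hr, c, hc, hcS⟩ := hle ξ hξ
    have hcξ := hcS ξ (Metric.mem_ball_self hr)
    have hpos : 0 < sSup (S ξ) := hc.trans_le (le_csSup (hbdd ξ) hcξ)
    obtain ⟨c', hc', hlt⟩ := exists_lt_of_lt_csSup ⟨c, hcξ⟩ (half_lt_self hpos)
    exact ⟨c', hc', half_pos hpos, hlt⟩
  refine ⟨δ, hδ, hδpos, hδzero, fun ξ => ?_, fun ξ hξ => ?_⟩
  · by_cases hξ : ξ ∈ U
    · obtain ⟨c, hc, -, hlt⟩ := hmem ξ hξ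
      exact ((hδle ξ hξ).1.trans hlt.le).trans hc.2.1
    · rw [hδzero ξ hξ]
      exact zero_le_one
  · obtain ⟨c, hc, hpos, hlt⟩ := hmem ξ hξ
    exact ⟨_, hpos, hP ξ c _ hpos hlt.le hc.2.2, hδle ξ hξ⟩

end

section Smoothing

variable {n m p : ℕ}
  {f : EuclideanSpace ℝ (Fin n) → EuclideanSpace ℝ (Fin m) → EuclideanSpace ℝ (Fin n)}
  {h : EuclideanSpace ℝ (Fin n) → EuclideanSpace ℝ (Fin p)}
  {x : ℝ → EuclideanSpace ℝ (Fin n) → (ℝ → EuclideanSpace ℝ (Fin m)) → EuclideanSpace ℝ (Fin n)}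
  {β : ℝ → ℝ → ℝ} {γ : ℝ → ℝ}

/-- First order expansion of a trajectory with constant input. -/
theorem IsBIBS.norm_sub_smul_le
    (hf : Continuous fun q : EuclideanSpace ℝ (Fin n) × EuclideanSpace ℝ (Fin m) => f q.1 q.2)
    (hB : IsBIBS f x) {R M K : ℝ} {μ : EuclideanSpace ℝ (Fin m)}
    {ζ ξ : EuclideanSpace ℝ (Fin n)} (hM : ∀ a, ‖a‖ ≤ R → ‖f a μ‖ ≤ M)
    (hK0 : 0 ≤ K) (hK : ∀ a b, ‖a‖ ≤ R → ‖b‖ ≤ R → ‖f a μ - f b μ‖ ≤ K * ‖a - b‖)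
    (hζ : ∀ s, 0 ≤ s → ‖x s ζ fun _ => μ‖ ≤ R) (hξ : ‖ξ‖ ≤ R) {s : ℝ} (hs : 0 ≤ s) :
    ‖(x s ζ fun _ => μ) - ζ‖ ≤ M * s ∧
      ‖(x s ζ fun _ => μ) - ζ - s • f ξ μ‖ ≤ s * (K * (M * s + ‖ζ - ξ‖)) := by
  have hr : ∀ _ : ℝ, ‖μ‖ ≤ ‖μ‖ := fun _ => le_rfl
  have hM0 : 0 ≤ M := (norm_nonneg _).trans (hM ξ hξ)
  have hsol : ∀ t, 0 ≤ t → IsSolutionOn f (fun t => x t ζ fun _ => μ) ζ (fun _ => μ) t :=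
    fun t ht => hB.isSolutionOn hf (isInput_of_forall measurable_const hr)
      (bddInput_of_forall hr) ζ ht
  have hsp : ∀ t, 0 ≤ t → ‖(x t ζ fun _ => μ) - ζ‖ ≤ M * t := by
    intro t ht
    have h1 := (hsol t ht).eq t ⟨ht, le_rfl⟩
    rw [show (x t ζ fun _ => μ) - ζ = ∫ s in (0:ℝ)..t, f (x s ζ fun _ => μ) μ by
      rw [sub_eq_iff_eq_add']; exact h1]
    have h2 := intervalIntegral.norm_integral_le_of_norm_le_const (a := (0:ℝ)) (b := t)
      (f := fun s => f (x s ζ fun _ => μ) μ) (C := M) fun s hs => by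
        rw [uIoc_of_le ht] at hs
        exact hM _ (hζ s hs.1.le)
    simpa [abs_of_nonneg ht] using h2
  refine ⟨hsp s hs, ?_⟩
  have h1 := (hsol s hs).eq s ⟨hs, le_rfl⟩
  have h2 : (x s ζ fun _ => μ) - ζ - s • f ξ μ =
      ∫ τ in (0:ℝ)..s, (f (x τ ζ fun _ => μ) μ - f ξ μ) := by
    rw [intervalIntegral.integral_sub (hsol s hs).integrable (by simp),
      intervalIntegral.integral_const, sub_zero, sub_left_inj, sub_eq_iff_eq_add']
    exact h1
  rw [h2]
  have h3 := intervalIntegral.norm_integral_le_of_norm_le_const (a := (0:ℝ)) (b := s)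
    (f := fun τ => f (x τ ζ fun _ => μ) μ - f ξ μ) (C := K * (M * s + ‖ζ - ξ‖)) fun τ hτ => by
      rw [uIoc_of_le hs] at hτ
      refine (hK _ _ (hζ τ hτ.1.le) hξ).trans (mul_le_mul_of_nonneg_left ?_ hK0)
      have h4 : ‖(x τ ζ fun _ => μ) - ξ‖ ≤ ‖(x τ ζ fun _ => μ) - ζ‖ + ‖ζ - ξ‖ :=
        norm_sub_le_norm_sub_add_norm_sub _ _ _
      have h5 := hsp τ hτ.1.le
      have h6 := mul_le_mul_of_nonneg_left hτ.2 hM0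
      linarith
  rw [sub_zero, abs_of_nonneg hs] at h3
  linarith

/-- A radius `c` at which `W` can be mollified near `ξ`: the values of `W` change by at most a
factor `2`, and `W` decreases uniformly along the shifted directions `f ξ μ`. -/
def IsMollifyRadius
    (f : EuclideanSpace ℝ (Fin n) → EuclideanSpace ℝ (Fin m) → EuclideanSpace ℝ (Fin n))
    (γ : ℝ → ℝ) (W : EuclideanSpace ℝ (Fin n) → ℝ) (ξ : EuclideanSpace ℝ (Fin n)) (c : ℝ) :
    Prop :=
  (∀ z, ‖z‖ ≤ c → W ξ / 2 ≤ W (ξ - z) ∧ W (ξ - z) ≤ 2 * W ξ) ∧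
  ∀ δ : EuclideanSpace ℝ (Fin n) → ℝ, DifferentiableAt ℝ δ ξ → 0 ≤ δ ξ → δ ξ ≤ c →
    ‖fderiv ℝ δ ξ‖ ≤ c → ∀ μ, 8 * γ ‖μ‖ ≤ W ξ → ∃ b > 0, ∀ᶠ s in 𝓝[>] (0:ℝ), ∀ z, ‖z‖ ≤ 1 →
      W (ξ + s • f ξ μ - δ (ξ + s • f ξ μ) • z) ≤ W (ξ - δ ξ • z) - b * s

theorem IsMollifyRadius.mono {W : EuclideanSpace ℝ (Fin n) → ℝ} {ξ : EuclideanSpace ℝ (Fin n)}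
    {c c' : ℝ} (hc : c' ≤ c) (H : IsMollifyRadius f γ W ξ c) : IsMollifyRadius f γ W ξ c' :=
  ⟨fun z hz => H.1 z (hz.trans hc), fun δ hδ h0 h1 h2 => H.2 δ hδ h0 (h1.trans hc) (h2.trans hc)⟩

theorem OutputEstimate.exists_isMollifyRadius (H : OutputEstimate h x β γ)
    (hf : LocallyLipschitz fun q : EuclideanSpace ℝ (Fin n) × EuclideanSpace ℝ (Fin m) =>
      f q.1 q.2) (hh : LocallyLipschitz h) (hB : IsBIBS f x) {ξ₀ : EuclideanSpace ℝ (Fin n)}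
    (hξ₀ : 0 < supLyapunov γ h x ξ₀) :
    ∃ r > 0, ∃ c > 0, ∀ ξ ∈ Metric.ball ξ₀ r,
      IsMollifyRadius f γ (supLyapunov γ h x) ξ c := by
  obtain ⟨σ, hσK, hσ⟩ := hB.2
  have hWc := H.continuous_supLyapunov hf hh hB
  set W := supLyapunov γ h x with hW
  set v₀ := W ξ₀
  obtain ⟨ρ, hρ0, hρ1, hρ⟩ : ∃ ρ > 0, ρ ≤ 1 ∧ ∀ η, ‖η - ξ₀‖ < ρ →
      3 / 4 * v₀ < W η ∧ W η < 5 / 4 * v₀ := by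
    have h1 : ∀ᶠ η in 𝓝 ξ₀, 3 / 4 * v₀ < W η ∧ W η < 5 / 4 * v₀ :=
      (hWc.continuousAt.eventually_const_lt (by linarith)).and
        (hWc.continuousAt.eventually_lt_const (by linarith))
    obtain ⟨ρ, hρ, hball⟩ := Metric.eventually_nhds_iff.1 h1
    exact ⟨min ρ 1, lt_min hρ one_pos, min_le_right _ _, fun η hη =>
      hball (by rw [dist_eq_norm]; exact hη.trans_le (min_le_left _ _))⟩
  set R := ‖ξ₀‖ + 2
  have hR0 : 0 ≤ R := by positivity
  have hε : 0 < 5 / 8 * v₀ := by positivity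
  obtain ⟨L, hL0, hL⟩ := H.exists_lipschitz_supLyapunov hf hh hB hR0 hε
  obtain ⟨a, ha0, ha⟩ := H.exists_decay_supLyapunov hf hB hR0 hε
  set R' := max R (max (σ R) (σ v₀))
  obtain ⟨M, hM0, hM⟩ := exists_norm_le_const hf.continuous R' v₀
  obtain ⟨K, hK0, hK⟩ := exists_lipschitz_const hf R' v₀
  set b := 3 / 4 * v₀ * a
  have hb0 : 0 < b := by positivity
  set c := min (ρ / 4) (b / (2 * (L * (2 * K + M + 1) + 1)))
  have hc0 : 0 < c := by positivity
  have hcρ : c ≤ ρ / 4 := min_le_left _ _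
  have hcb : c * (2 * (L * (2 * K + M + 1) + 1)) ≤ b :=
    (le_div_iff₀ (by positivity)).1 (min_le_right _ _)
  refine ⟨ρ / 4, by positivity, c, hc0, fun ξ hξ => ?_⟩
  rw [Metric.mem_ball, dist_eq_norm] at hξ
  have hnear : ∀ z, ‖z‖ ≤ c → ‖ξ - z - ξ₀‖ ≤ ρ / 2 := fun z hz => by
    have : ‖ξ - z - ξ₀‖ ≤ ‖ξ - ξ₀‖ + ‖z‖ := by
      rw [sub_right_comm]
      exact norm_sub_le _ _
    linarith
  obtain ⟨hξ1, hξ2⟩ := hρ ξ (by linarith)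
  refine ⟨fun z hz => ?_, fun δ hδ hδ0 hδc hDδ μ hμ => ⟨b / 2, by positivity, ?_⟩⟩
  · obtain ⟨h1, h2⟩ := hρ (ξ - z) (by linarith [hnear z hz])
    constructor <;> linarith
  have hμv : ‖μ‖ ≤ v₀ := by linarith [H.le_gain _ (norm_nonneg μ), norm_nonneg μ]
  have hξR : ‖ξ‖ ≤ R := by linarith [norm_le_norm_add_norm_sub' ξ ξ₀]
  set v := f ξ μ with hv
  have hvM : ‖v‖ ≤ M := hM ξ μ (hξR.trans (le_max_left _ _)) hμv
  have hδs : ∀ᶠ s in 𝓝[>] (0:ℝ), |δ (ξ + s • v) - δ ξ| ≤ s * (c * (M + 1)) := by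
    have h1 := ((hδ.hasFDerivAt.hasLineDerivAt v).tendsto_slope_zero_right).abs
    have h2 : |fderiv ℝ δ ξ v| < c * (M + 1) := by
      have h3 := (fderiv ℝ δ ξ).le_opNorm v
      have h4 := mul_le_mul hDδ hvM (norm_nonneg _) hc0.le
      rw [Real.norm_eq_abs] at h3
      linarith
    filter_upwards [h1.eventually_lt_const h2, self_mem_nhdsWithin] with s hs hs0
    have hs0 : 0 < s := hs0
    rw [smul_eq_mul, abs_mul, abs_of_pos (inv_pos.2 hs0), inv_mul_lt_iff₀ hs0] at hs
    exact hs.le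
  have hsmall : ∀ B : ℝ, 0 < B → ∀ᶠ s in 𝓝[>] (0:ℝ), s < B := fun B hB =>
    nhdsWithin_le_nhds (Iio_mem_nhds hB)
  filter_upwards [hδs, self_mem_nhdsWithin, hsmall 1 one_pos, hsmall (c / (M + 1)) (by positivity),
    hsmall (1 / (6 * a)) (by positivity), hsmall (1 / (2 * K + M + 2)) (by positivity)]
    with s hs hs0 hs1 hsM hsa hsK z hz
  have hs0 : 0 < s := hs0
  rw [lt_div_iff₀ (by positivity)] at hsM hsa hsK
  have hMs : M * s ≤ c := by nlinarith
  set ζ := ξ - δ ξ • z with hζ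
  have hδz : ‖δ ξ • z‖ ≤ c := by
    rw [norm_smul, Real.norm_of_nonneg hδ0]
    exact (mul_le_of_le_one_right hδ0 hz).trans hδc
  have hζξ₀ := hnear _ hδz
  rw [← hζ] at hζξ₀
  have hζW := (hρ ζ (by linarith)).1
  have hζR : ‖ζ‖ ≤ R := by linarith [norm_le_norm_add_norm_sub' ζ ξ₀]
  have hμr : ∀ _ : ℝ, ‖μ‖ ≤ v₀ := fun _ => hμv
  have htraj : ∀ τ, 0 ≤ τ → ‖x τ ζ fun _ => μ‖ ≤ R' := fun τ hτ =>
    ((hσ ζ _ (isInput_of_forall measurable_const hμr) (bddInput_of_forall hμr) τ hτ).trans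
      (max_le_max (hσK.mono (norm_nonneg ζ) hζR)
        (hσK.mono uNorm_nonneg (uNorm_le_of_forall hμr)))).trans (le_max_right _ _)
  obtain ⟨hq1, hq2⟩ := hB.norm_sub_smul_le hf.continuous (fun a ha => hM a μ ha hμv) hK0
    (fun a b ha hb => hK a b μ ha hb hμv) htraj (hξR.trans (le_max_left _ _)) hs0.le
  have hdec := ha ζ μ s hζR (by linarith) hs0.le hs1.le
  set q := x s ζ fun _ => μ
  set y := ξ + s • v - δ (ξ + s • v) • z with hy
  have hζξ : ‖ζ - ξ‖ ≤ c := by rwa [hζ, sub_sub_cancel_left, norm_neg]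
  have hyq : ‖y - q‖ ≤ s * (c * (2 * K + M + 1)) := by
    have h1 : y - q = -(q - ζ - s • v) - (δ (ξ + s • v) - δ ξ) • z := by
      rw [hy, hζ, sub_smul]
      abel
    have h2 : ‖(δ (ξ + s • v) - δ ξ) • z‖ ≤ s * (c * (M + 1)) := by
      rw [norm_smul, Real.norm_eq_abs]
      exact (mul_le_of_le_one_right (abs_nonneg _) hz).trans hs
    have h3 : s * (K * (M * s + ‖ζ - ξ‖)) ≤ s * (K * (2 * c)) := by
      gcongr
      linarith
    rw [h1]
    refine (norm_sub_le _ _).trans ?_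
    rw [norm_neg]
    linarith
  have hc1 : c ≤ 1 := by linarith
  have hyq1 : ‖y - q‖ ≤ 1 := by
    refine hyq.trans ?_
    have : s * (c * (2 * K + M + 1)) ≤ s * (1 * (2 * K + M + 1)) := by gcongr
    linarith
  have hqξ₀ : ‖q - ξ₀‖ < ρ := by
    have := norm_sub_le_norm_sub_add_norm_sub q ζ ξ₀
    linarith
  have hqR : ‖q‖ ≤ ‖ξ₀‖ + 1 := by linarith [norm_le_norm_add_norm_sub' q ξ₀]
  have hyR : ‖y‖ ≤ R := by
    have := norm_le_norm_add_norm_sub' y q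
    linarith
  have hLip := hL y q hyR (by linarith)
  have hqW := (hρ q hqξ₀).1
  rw [← hW, max_eq_left (by linarith)] at hLip
  rw [← hW] at hdec
  have hdec' : W q ≤ W ζ - b * s := by
    refine hdec.trans (max_le ?_ ?_)
    · have : b * s = 1 / 8 * v₀ * (s * (6 * a)) := by ring
      nlinarith
    · have : 3 / 4 * v₀ * (a * s) ≤ W ζ * (a * s) :=
        mul_le_mul_of_nonneg_right hζW.le (by positivity)
      have h2 : b * s = 3 / 4 * v₀ * (a * s) := by ring
      linarith
  have hLs : L * ‖y - q‖ ≤ b / 2 * s := by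
    have h1 := mul_le_mul_of_nonneg_left hyq hL0
    have h2 : L * (s * (c * (2 * K + M + 1))) ≤ s * (b / 2) := by
      have : L * (s * (c * (2 * K + M + 1))) = s * (c * (L * (2 * K + M + 1))) := by ring
      rw [this]
      exact mul_le_mul_of_nonneg_left (by linarith) hs0.le
    linarith
  linarith

/-- The function `supLyapunov` can be approximated by a function which is smooth outside its zero
set and decreases along the system. -/
theorem OutputEstimate.exists_contDiffOn_lyapunov (H : OutputEstimate h x β γ)
    (hf : LocallyLipschitz fun q : EuclideanSpace ℝ (Fin n) × EuclideanSpace ℝ (Fin m) =>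
      f q.1 q.2) (hh : LocallyLipschitz h) (hB : IsBIBS f x) :
    ∃ g : EuclideanSpace ℝ (Fin n) → ℝ,
      ContDiffOn ℝ (⊤ : ℕ∞) g {ξ | 0 < supLyapunov γ h x ξ} ∧
      (∀ ξ, supLyapunov γ h x ξ / 2 ≤ g ξ ∧ g ξ ≤ 2 * supLyapunov γ h x ξ) ∧
      ∀ ξ μ, 0 < supLyapunov γ h x ξ → 8 * γ ‖μ‖ ≤ supLyapunov γ h x ξ →
        fderiv ℝ g ξ (f ξ μ) < 0 := by
  have hWc := H.continuous_supLyapunov hf hh hB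
  have hW0 : ∀ ξ, 0 ≤ supLyapunov γ h x ξ := fun ξ =>
    (norm_nonneg _).trans (H.norm_le_supLyapunov hB.1 ξ)
  have hrad := fun ξ₀ => H.exists_isMollifyRadius hf hh hB (ξ₀ := ξ₀)
  set W := supLyapunov γ h x
  set U := {ξ | 0 < W ξ}
  have hU : IsOpen U := isOpen_lt continuous_const hWc
  obtain ⟨δ, hδ, hδpos, hδzero, hδ1, hδP⟩ := exists_contDiff_of_antitone hU
    (P := IsMollifyRadius f γ W) (fun ξ c c' _ hc hP => hP.mono hc) hrad
  have hδ0 : ∀ ξ, 0 ≤ δ ξ := fun ξ => by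
    by_cases hξ : ξ ∈ U
    · exact (hδpos ξ hξ).le
    · exact (hδzero ξ hξ).ge
  have hkc : ∀ ξ, Continuous fun z => W (ξ - δ ξ • z) := fun ξ => by fun_prop
  have hsmooth : ContDiffOn ℝ (⊤ : ℕ∞) (fun ξ => mollAvg fun z => W (ξ - δ ξ • z)) U :=
    (contDiffOn_mollAvg hWc hδ hδ1).mono fun ξ hξ => hδpos ξ hξ
  refine ⟨fun ξ => mollAvg fun z => W (ξ - δ ξ • z), hsmooth, fun ξ => ?_,
    fun ξ μ hξ hμ => ?_⟩
  · by_cases hξ : ξ ∈ U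
    · obtain ⟨c, hc0, hP, hδc, -⟩ := hδP ξ hξ
      have hz : ∀ z : EuclideanSpace ℝ (Fin n), ‖z‖ ≤ 1 → ‖δ ξ • z‖ ≤ c := fun z hz => by
        rw [norm_smul, Real.norm_of_nonneg (hδ0 ξ)]
        exact (mul_le_of_le_one_right (hδ0 ξ) hz).trans hδc
      have h1 := mollAvg_mono (c := 0) continuous_const (hkc ξ) fun z hz1 => by
        simpa using (hP.1 _ (hz z hz1)).1
      have h2 := mollAvg_mono (c := 0) (hkc ξ) continuous_const fun z hz1 => by
        simpa using (hP.1 _ (hz z hz1)).2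
      rw [mollAvg_const, add_zero] at h1 h2
      exact ⟨h1, h2⟩
    · have h0 : W ξ = 0 := le_antisymm (not_lt.1 hξ) (hW0 ξ)
      simp [hδzero ξ hξ, h0, mollAvg_const]
  · obtain ⟨c, hc0, hP, hδc, hDδ⟩ := hδP ξ hξ
    obtain ⟨b, hb, hev⟩ := hP.2 δ (hδ.differentiable (by simp) ξ) (hδ0 ξ) hδc hDδ μ hμ
    have hdiff : DifferentiableAt ℝ (fun ξ => mollAvg fun z => W (ξ - δ ξ • z)) ξ :=
      (hsmooth.contDiffAt (hU.mem_nhds hξ)).differentiableAt (by simp)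
    have hlim := (hdiff.hasFDerivAt.hasLineDerivAt (f ξ μ)).tendsto_slope_zero_right
    refine lt_of_le_of_lt (le_of_tendsto hlim ?_) (neg_lt_zero.2 hb)
    filter_upwards [hev, self_mem_nhdsWithin] with s hs hs0
    have hs0 : 0 < s := hs0
    have h1 := mollAvg_mono (c := -(b * s)) (hkc (ξ + s • f ξ μ)) (hkc ξ) fun z hz => by
      simpa [sub_eq_add_neg] using hs z hz
    rw [smul_eq_mul, inv_mul_le_iff₀ hs0]
    linarith

end Smoothing

/-! ### Smooth reparametrization across the zero set -/

/-- A smooth monotone function that vanishes up to `ε` and is eventually the identity. -/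
def thresholdFun (ε v : ℝ) : ℝ := v * Real.smoothTransition (v - ε)

section Threshold

variable {ε v : ℝ}

theorem contDiff_thresholdFun (ε : ℝ) : ContDiff ℝ (⊤ : ℕ∞) (thresholdFun ε) :=
  contDiff_id.mul (Real.smoothTransition.contDiff.comp (contDiff_id.sub contDiff_const))

theorem thresholdFun_eq_zero (h : v ≤ ε) : thresholdFun ε v = 0 := by
  rw [thresholdFun, Real.smoothTransition.zero_of_nonpos (by linarith), mul_zero]

theorem thresholdFun_nonneg (hε : 0 ≤ ε) : 0 ≤ thresholdFun ε v := by
  rcases le_total v ε with h | h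
  · exact (thresholdFun_eq_zero h).ge
  · exact mul_nonneg (hε.trans h) (Real.smoothTransition.nonneg _)

theorem monotone_thresholdFun (hε : 0 ≤ ε) : Monotone (thresholdFun ε) := by
  intro v w hvw
  rcases le_total v ε with h | h
  · rw [thresholdFun_eq_zero h]
    exact thresholdFun_nonneg hε
  · exact mul_le_mul hvw (Real.smoothTransition.monotone (by linarith))
      (Real.smoothTransition.nonneg _) (by linarith)

theorem thresholdFun_le_abs (ε v : ℝ) : thresholdFun ε v ≤ |v| :=
  (mul_le_mul_of_nonneg_right (le_abs_self v) (Real.smoothTransition.nonneg _)).trans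
    (mul_le_of_le_one_right (abs_nonneg v) (Real.smoothTransition.le_one _))

theorem thresholdFun_eq_self (h : ε + 1 ≤ v) : thresholdFun ε v = v := by
  rw [thresholdFun, Real.smoothTransition.one_of_one_le (by linarith), mul_one]

theorem deriv_thresholdFun_pos (hε : 0 ≤ ε) (hv : ε < v) : 0 < deriv (thresholdFun ε) v := by
  have hd : Differentiable ℝ Real.smoothTransition :=
    (Real.smoothTransition.contDiff (n := 1)).differentiable (by simp)
  have h1 : HasDerivAt (fun w => Real.smoothTransition (w - ε))
      (deriv Real.smoothTransition (v - ε)) v :=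
    HasDerivAt.comp_sub_const v ε (hd _).hasDerivAt
  have h2 := ((hasDerivAt_id v).mul h1).deriv
  have h3 : 0 ≤ deriv Real.smoothTransition (v - ε) := Real.smoothTransition.monotone.deriv_nonneg
  have h4 : 0 < Real.smoothTransition (v - ε) :=
    Real.smoothTransition.pos_of_pos (by linarith)
  have h5 : deriv (thresholdFun ε) v =
      1 * Real.smoothTransition (v - ε) + v * deriv Real.smoothTransition (v - ε) := h2
  rw [h5]
  have : 0 ≤ v := by linarith
  positivity

end Threshold

/-- A function which is smooth outside its zero set becomes globally smooth after composition with
a suitable smooth class-`K∞` function. -/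
theorem exists_contDiff_comp {E : Type*} [NormedAddCommGroup E] [NormedSpace ℝ E]
    [FiniteDimensional ℝ E] {W g : E → ℝ} (hW : Continuous W)
    (hg : ContDiffOn ℝ (⊤ : ℕ∞) g {ξ | 0 < W ξ}) (hgW : ∀ ξ, g ξ ≤ 2 * W ξ) :
    ∃ Φ : ℝ → ℝ, Differentiable ℝ Φ ∧ ContDiff ℝ (⊤ : ℕ∞) (fun ξ => Φ (g ξ)) ∧
      IsClassKInfty Φ ∧ (∀ v, 0 ≤ v → Φ v ≤ v) ∧ ∀ v, 0 < v → 0 < deriv Φ v := by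
  set ε : ℕ → ℝ := fun k => (1 / 2) ^ k with hεdef
  have hε0 : ∀ k, 0 < ε k := fun k => by positivity
  set θ : ℕ → ℝ → ℝ := fun k => thresholdFun (ε k)
  have hθ : ∀ k, ContDiff ℝ (⊤ : ℕ∞) (θ k) := fun k => contDiff_thresholdFun _
  have hθ0 : ∀ k v, 0 ≤ θ k v := fun k v => thresholdFun_nonneg (hε0 k).le
  have hθm : ∀ k, Monotone (θ k) := fun k => monotone_thresholdFun (hε0 k).le
  have hθg : ∀ k, ContDiff ℝ (⊤ : ℕ∞) fun ξ => θ k (g ξ) := by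
    intro k
    have hWo : IsOpen {ξ | 0 < W ξ} := isOpen_lt continuous_const hW
    refine contDiff_iff_contDiffAt.2 fun ξ => ?_
    rcases lt_or_ge 0 (W ξ) with hξ | hξ
    · exact (hθ k).contDiffAt.comp ξ (hg.contDiffAt (hWo.mem_nhds hξ))
    · have h1 : ∀ᶠ η in 𝓝 ξ, W η < ε k / 2 :=
        hW.continuousAt.eventually_lt_const (hξ.trans_lt (half_pos (hε0 k)))
      refine (contDiffAt_const (c := (0 : ℝ))).congr_of_eventuallyEq ?_
      filter_upwards [h1] with η hη
      exact thresholdFun_eq_zero (by linarith [hgW η])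
  obtain ⟨c, hc0, hc⟩ := exists_coeff_contDiff_tsum_of_finiteDimensional hθ
  obtain ⟨d, hd0, hd⟩ := exists_coeff_contDiff_tsum_of_finiteDimensional hθg
  set a : ℕ → ℝ := fun k => min (min (c k) (d k)) ((1 / 2) ^ (k + 1)) with ha
  have ha0 : ∀ k, 0 < a k := fun k => lt_min (lt_min (hc0 k) (hd0 k)) (by positivity)
  have hgeo : HasSum (fun k : ℕ => (1 / 2 : ℝ) ^ (k + 1)) 1 := by
    have := hasSum_geometric_two.mul_right (1 / 2 : ℝ)
    simpa [pow_succ] using this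
  have hterm : ∀ k v, a k * θ k v ≤ (1 / 2) ^ (k + 1) * |v| := fun k v =>
    mul_le_mul (min_le_right _ _) (thresholdFun_le_abs _ v) (hθ0 k v) (by positivity)
  have hsum : ∀ v, Summable fun k => a k * θ k v := fun v =>
    Summable.of_nonneg_of_le (fun k => mul_nonneg (ha0 k).le (hθ0 k v)) (fun k => hterm k v)
      (hgeo.summable.mul_right _)
  set Φ : ℝ → ℝ := fun v => ∑' k, a k * θ k v with hΦ
  have hΦd : ContDiff ℝ (⊤ : ℕ∞) Φ := hc a fun k => by
    rw [abs_of_pos (ha0 k)]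
    exact (min_le_left _ _).trans (min_le_left _ _)
  have hΦg : ContDiff ℝ (⊤ : ℕ∞) fun ξ => Φ (g ξ) := hd a fun k => by
    rw [abs_of_pos (ha0 k)]
    exact (min_le_left _ _).trans (min_le_right _ _)
  have hΦ0 : Φ 0 = 0 := by
    have : ∀ k, a k * θ k 0 = 0 := fun k => by
      rw [show θ k 0 = 0 from thresholdFun_eq_zero (hε0 k).le, mul_zero]
    simp [hΦ, this]
  have hΦle : ∀ v, 0 ≤ v → Φ v ≤ v := fun v hv => by
    have h1 := hasSum_le (fun k => hterm k v) (hsum v).hasSum (hgeo.mul_right |v|)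
    rwa [one_mul, abs_of_nonneg hv] at h1
  have hΦdiff : Differentiable ℝ Φ := hΦd.differentiable (by simp)
  have hΦderiv : ∀ v, 0 < v → 0 < deriv Φ v := by
    intro v hv
    obtain ⟨k, hk⟩ := exists_pow_lt_of_lt_one hv (by norm_num : (1 / 2 : ℝ) < 1)
    have hθd : Differentiable ℝ (θ k) := (hθ k).differentiable (by simp)
    have hmono : Monotone fun w => Φ w - a k * θ k w := by
      intro w z hwz
      have h1 := ((hsum z).hasSum.sub (hsum w).hasSum)
      have h2 := le_hasSum h1 k fun j _ =>
        sub_nonneg.2 (mul_le_mul_of_nonneg_left (hθm j hwz) (ha0 j).le)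
      change Φ w - a k * θ k w ≤ Φ z - a k * θ k z
      linarith
    have h3 := hmono.deriv_nonneg (x := v)
    rw [deriv_fun_sub (hΦdiff v) ((hθd v).const_mul _), deriv_const_mul _ (hθd v)] at h3
    have h4 := mul_pos (ha0 k) (deriv_thresholdFun_pos (hε0 k).le hk)
    linarith
  refine ⟨Φ, hΦdiff, hΦg, ⟨⟨hΦd.continuous.continuousOn, ?_, hΦ0⟩, ?_⟩, hΦle, hΦderiv⟩
  · refine strictMonoOn_of_deriv_pos (convex_Ici 0) hΦd.continuous.continuousOn fun v hv => ?_
    rw [interior_Ici] at hv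
    exact hΦderiv v hv
  · refine tendsto_atTop_mono' atTop ?_ (tendsto_id.const_mul_atTop (ha0 0))
    filter_upwards [eventually_ge_atTop 2] with v hv
    have h1 : θ 0 v = v := thresholdFun_eq_self (by norm_num [hεdef]; linarith)
    have h2 := (hsum v).le_tsum 0 fun j _ => mul_nonneg (ha0 j).le (hθ0 j v)
    rw [h1] at h2
    exact h2

section Necessity

variable {n m p : ℕ}
  {f : EuclideanSpace ℝ (Fin n) → EuclideanSpace ℝ (Fin m) → EuclideanSpace ℝ (Fin n)}
  {h : EuclideanSpace ℝ (Fin n) → EuclideanSpace ℝ (Fin p)}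
  {x : ℝ → EuclideanSpace ℝ (Fin n) → (ℝ → EuclideanSpace ℝ (Fin m)) → EuclideanSpace ℝ (Fin n)}

/-- Converse Lyapunov theorem for input-to-output stability. -/
theorem IsIOS.exists_lyapunov (hI : IsIOS h x)
    (hf : LocallyLipschitz fun q : EuclideanSpace ℝ (Fin n) × EuclideanSpace ℝ (Fin m) =>
      f q.1 q.2) (hh : LocallyLipschitz h) (hB : IsBIBS f x) :
    ∃ (V : EuclideanSpace ℝ (Fin n) → ℝ) (α₁ α₂ χ : ℝ → ℝ),
      ContDiff ℝ (⊤ : ℕ∞) V ∧ (∀ ξ, 0 ≤ V ξ) ∧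
      IsClassKInfty α₁ ∧ IsClassKInfty α₂ ∧ IsClassK χ ∧
      (∀ ξ, α₁ ‖h ξ‖ ≤ V ξ ∧ V ξ ≤ α₂ ‖ξ‖) ∧
      (∀ ξ μ, χ ‖μ‖ < V ξ → fderiv ℝ V ξ (f ξ μ) < 0) := by
  obtain ⟨β, γ, H⟩ := hI.exists_outputEstimate
  have hWc := H.continuous_supLyapunov hf hh hB
  have hWh := H.norm_le_supLyapunov hB.1
  have hWβ := H.supLyapunov_le_beta
  obtain ⟨g, hg, hgW, hgdec⟩ := H.exists_contDiffOn_lyapunov hf hh hB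
  set W := supLyapunov γ h x
  have hWo : IsOpen {ξ | 0 < W ξ} := isOpen_lt continuous_const hWc
  obtain ⟨Φ, hΦd, hΦg, hΦK, hΦle, hΦderiv⟩ := exists_contDiff_comp hWc hg fun ξ => (hgW ξ).2
  have hg0 : ∀ ξ, 0 ≤ g ξ := fun ξ => by
    linarith [(hgW ξ).1, hWh ξ, norm_nonneg (h ξ)]
  refine ⟨fun ξ => Φ (g ξ), fun s => Φ (s / 2), fun s => 4 * β s 0 + s, fun s => 16 * γ s,
    hΦg, fun ξ => hΦK.1.nonneg (hg0 ξ), ⟨hΦK.1.comp ?_, ?_⟩,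
    ((H.isClassKL.1 0 self_mem_Ici).const_mul four_pos).add_id,
    H.isClassK.const_mul (by norm_num), fun ξ => ⟨?_, ?_⟩, fun ξ μ hμ => ?_⟩
  · simpa [div_eq_inv_mul] using isClassK_id.const_mul (c := (2 : ℝ)⁻¹) (by norm_num)
  · exact hΦK.2.comp (tendsto_id.atTop_div_const two_pos)
  · exact hΦK.1.mono (by positivity) (by linarith [(hgW ξ).1, hWh ξ])
  · have := hΦle _ (hg0 ξ)
    linarith [(hgW ξ).2, hWβ ξ, norm_nonneg ξ]
  · have h1 : Φ (g ξ) ≤ g ξ := hΦle _ (hg0 ξ)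
    have h2 : 0 ≤ γ ‖μ‖ := H.isClassK.nonneg (norm_nonneg μ)
    have h3 := (hgW ξ).2
    have hμ : 16 * γ ‖μ‖ < Φ (g ξ) := hμ
    have hξ : 0 < W ξ := by linarith
    have hgd : DifferentiableAt ℝ g ξ :=
      (hg.contDiffAt (hWo.mem_nhds hξ)).differentiableAt (by simp)
    have hcomp : HasFDerivAt (fun ξ => Φ (g ξ)) (deriv Φ (g ξ) • fderiv ℝ g ξ) ξ :=
      (hΦd (g ξ)).hasDerivAt.comp_hasFDerivAt ξ hgd.hasFDerivAt
    rw [hcomp.fderiv]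
    exact mul_neg_of_pos_of_neg (hΦderiv _ (by linarith)) (hgdec ξ μ hξ (by linarith))

end Necessity

/-- A BIBS system is IOS if and only if there exist a smooth `V`, class-`K∞` functions
`α₁, α₂` and a class-`K` function `χ` with `α₁(|h(ξ)|) ≤ V(ξ) ≤ α₂(|ξ|)` and such that
`V(ξ) > χ(|μ|)` implies `∇V(ξ)·f(ξ,μ) < 0`. -/
theorem ios_iff_exists_strictDecayLyapunov {n m p : ℕ}
    (f : EuclideanSpace ℝ (Fin n) → EuclideanSpace ℝ (Fin m) → EuclideanSpace ℝ (Fin n))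
    (h : EuclideanSpace ℝ (Fin n) → EuclideanSpace ℝ (Fin p))
    (x : ℝ → EuclideanSpace ℝ (Fin n) → (ℝ → EuclideanSpace ℝ (Fin m)) →
      EuclideanSpace ℝ (Fin n))
    (hf : LocallyLipschitz fun q : EuclideanSpace ℝ (Fin n) × EuclideanSpace ℝ (Fin m) =>
      f q.1 q.2)
    (hf0 : f 0 0 = 0)
    (hh : LocallyLipschitz h) (hh0 : h 0 = 0)
    (hBIBS : IsBIBS f x) :
    IsIOS h x ↔
      ∃ (V : EuclideanSpace ℝ (Fin n) → ℝ) (α₁ α₂ χ : ℝ → ℝ),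
        ContDiff ℝ (⊤:ℕ∞) V ∧ (∀ ξ, 0 ≤ V ξ) ∧
        IsClassKInfty α₁ ∧ IsClassKInfty α₂ ∧ IsClassK χ ∧
        (∀ ξ, α₁ ‖h ξ‖ ≤ V ξ ∧ V ξ ≤ α₂ ‖ξ‖) ∧
        (∀ ξ μ, χ ‖μ‖ < V ξ → fderiv ℝ V ξ (f ξ μ) < 0) := by
  refine ⟨fun hI => hI.exists_lyapunov hf hh hBIBS, ?_⟩
  rintro ⟨V, α₁, α₂, χ, hV, -, hα₁, hα₂, hχ, hbd, hdec⟩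
  exact isIOS_of_lyapunov hf hBIBS (hV.of_le (by exact_mod_cast le_top)) hα₁ hα₂ hχ hbd hdec
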